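/- arXiv:math/0507026 — 4 statements merged into one kernel-verified Lean document; each statement's English description precedes it below -/
import Mathlib

section
/- The number of set partitions of the set {1, 2, ..., 2k} equals the sum over partitions λ of size at most k of the square of the number of vacillating tableaux of shape λ and length 2k. -/
/-- A vacillating tableau of length `2k` (Γ_k indexing): a sequence of Young diagrams
starting at the empty diagram, where at each half-step at most one box is removed and at
each whole step at most one box is added; constant after position `2k`. -/
def VacSeq (k : ℕ) (f : ℕ → YoungDiagram) : Prop :=
  f 0 = ⊥ ∧
  (∀ i < k, f (2*i+1) ≤ f (2*i) ∧ (f (2*i)).card ≤ (f (2*i+1)).card + 1) ∧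
  (∀ i < k, f (2*i+1) ≤ f (2*i+2) ∧ (f (2*i+2)).card ≤ (f (2*i+1)).card + 1) ∧
  (∀ j, 2*k ≤ j → f j = f (2*k))

/-- The number of vacillating tableaux of shape `lam` and length `2k`. -/
noncomputable def mVT (k : ℕ) (lam : YoungDiagram) : ℕ :=
  Nat.card {f : ℕ → YoungDiagram // VacSeq k f ∧ f (2*k) = lam}


/-- Number of ways to distribute `n` further elements when there are already `m` blocks. -/
def bellAux : ℕ → ℕ → ℕ
  | 0, _ => 1
  | n+1, m => bellAux n (m+1) + m * bellAux n m

theorem card_finpartition_eq_setoid (α : Type) [Fintype α] [DecidableEq α] :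
    Nat.card (Finpartition (Finset.univ : Finset α)) = Nat.card (Setoid α) := by
  classical
  refine Nat.card_eq_of_bijective (fun P => Setoid.ker P.part) ⟨?_, ?_⟩
  · intro P Q h
    have hpart : ∀ a, P.part a = Q.part a := by
      intro a
      ext b
      have h1 : Setoid.ker P.part a b ↔ Setoid.ker Q.part a b := by
        have : Setoid.ker P.part = Setoid.ker Q.part := h
        rw [this]
      simp only [Setoid.ker_def] at h1
      rw [Finpartition.mem_part_iff_part_eq_part _ (Finset.mem_univ _) (Finset.mem_univ _),
        Finpartition.mem_part_iff_part_eq_part _ (Finset.mem_univ _) (Finset.mem_univ _)]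
      constructor
      · intro h; exact (h1.1 h.symm).symm
      · intro h; exact (h1.2 h.symm).symm
    have key : ∀ P : Finpartition (Finset.univ : Finset α),
        P.parts = Finset.univ.image P.part := by
      intro P
      ext t
      simp only [Finset.mem_image, Finset.mem_univ, true_and]
      constructor
      · intro ht
        obtain ⟨a, ha⟩ := P.nonempty_of_mem_parts ht
        exact ⟨a, P.part_eq_of_mem ht ha⟩
      · rintro ⟨a, rfl⟩
        exact P.part_mem.2 (Finset.mem_univ _)
    apply Finpartition.ext
    rw [key P, key Q]
    congr 1
    funext a; exact hpart a
  · intro s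
    refine ⟨Finpartition.ofSetoid s, ?_⟩
    ext a b
    simp only [Setoid.ker_def]
    rw [← Finpartition.mem_part_ofSetoid_iff_rel,
      Finpartition.mem_part_iff_part_eq_part _ (Finset.mem_univ _) (Finset.mem_univ _)]
    exact eq_comm

/-- The map extending a setoid by one element. -/
def extMap {α : Type} (s : Setoid α) (o : Option (Quotient s)) : Option α → Option (Quotient s)
  | none => o
  | some a => some (Quotient.mk s a)

theorem ext_bij (α : Type) : Function.Bijective
    (fun p : (Σ s : Setoid α, Option (Quotient s)) => Setoid.ker (extMap p.1 p.2)) := by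
  classical
  constructor
  · rintro ⟨s, o⟩ ⟨s', o'⟩ h
    have h' : ∀ x y, extMap s o x = extMap s o y ↔ extMap s' o' x = extMap s' o' y := by
      intro x y
      have : Setoid.ker (extMap s o) = Setoid.ker (extMap s' o') := h
      have h2 : Setoid.ker (extMap s o) x y ↔ Setoid.ker (extMap s' o') x y := by rw [this]
      simpa only [Setoid.ker_def] using h2
    have hs : s = s' := by
      ext a b
      have := h' (some a) (some b)
      simpa [extMap, Quotient.eq] using this
    subst hs
    congr 1
    apply Option.ext
    intro q
    induction q using Quotient.inductionOn with
    | h a =>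
      have := h' none (some a)
      simpa [extMap] using this
  · intro t
    let s : Setoid α := Setoid.comap some t
    by_cases hx : ∃ a, t none (some a)
    · obtain ⟨a, ha⟩ := hx
      refine ⟨⟨s, some (Quotient.mk s a)⟩, ?_⟩
      ext x y
      simp only [Setoid.ker_def]
      have e : ∀ u v, Quotient.mk s u = Quotient.mk s v ↔ t (some u) (some v) := by
        intro u v; rw [Quotient.eq]; rfl
      cases x <;> cases y <;> simp only [extMap, Option.some.injEq, e]
      · exact ⟨fun _ => t.refl _, fun _ => trivial⟩
      · exact ⟨fun h => t.trans ha h, fun h => t.trans (t.symm ha) h⟩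
      · exact ⟨fun h => t.trans h (t.symm ha), fun h => t.trans h ha⟩
    · refine ⟨⟨s, none⟩, ?_⟩
      have e : ∀ u v, Quotient.mk s u = Quotient.mk s v ↔ t (some u) (some v) := by
        intro u v; rw [Quotient.eq]; rfl
      push Not at hx
      ext x y
      simp only [Setoid.ker_def]
      cases x <;> cases y <;> simp only [extMap, Option.some.injEq, e]
      · exact ⟨fun _ => t.refl _, fun _ => trivial⟩
      · simp [hx]
      · simp only [reduceCtorEq, false_iff]
        exact fun h => hx _ (t.symm h)

theorem card_quot_ext {α : Type} [Finite α] (s : Setoid α) (o : Option (Quotient s)) :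
    Nat.card (Quotient (Setoid.ker (extMap s o))) =
      o.elim (Nat.card (Quotient s) + 1) (fun _ => Nat.card (Quotient s)) := by
  rw [Nat.card_congr (Setoid.quotientKerEquivRange (extMap s o))]
  cases o with
  | none =>
    have : Set.range (extMap s none) = Set.univ := by
      rw [Set.range_eq_univ]
      rintro (_ | q)
      · exact ⟨none, rfl⟩
      · induction q using Quotient.inductionOn with
        | h a => exact ⟨some a, rfl⟩
    rw [this, Nat.card_univ, Finite.card_option]; rfl
  | some q =>
    have : Set.range (extMap s (some q)) = Set.range some := by
      ext x
      constructor
      · rintro ⟨_ | a, rfl⟩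
        · exact ⟨q, rfl⟩
        · exact ⟨_, rfl⟩
      · rintro ⟨q, rfl⟩
        induction q using Quotient.inductionOn with
        | h a => exact ⟨some a, rfl⟩
    rw [this, Nat.card_range_of_injective (Option.some_injective _)]; rfl

theorem sum_setoid_step (α : Type) [Fintype α] [Fintype (Setoid α)]
    [Fintype (Setoid (Option α))] (n : ℕ) :
    ∑ s : Setoid (Option α), bellAux n (Nat.card (Quotient s)) =
      ∑ s : Setoid α, bellAux (n+1) (Nat.card (Quotient s)) := by
  classical
  have : ∀ s : Setoid α, Fintype (Quotient s) := fun s => Fintype.ofFinite _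
  rw [← (Equiv.ofBijective _ (ext_bij α)).sum_comp, Fintype.sum_sigma]
  refine Finset.sum_congr rfl fun s _ => ?_
  simp only [Equiv.ofBijective_apply, card_quot_ext]
  rw [Fintype.sum_option]
  simp [bellAux]

instance setoidFinite (α : Type) [Finite α] : Finite (Setoid α) := by
  refine Finite.of_injective (fun s : Setoid α => fun a b => s a b) ?_
  intro s t h
  ext a b
  exact iff_of_eq (congrFun (congrFun h a) b)

theorem card_setoid_congr {α β : Type} (e : α ≃ β) : Nat.card (Setoid α) = Nat.card (Setoid β) := by
  refine Nat.card_congr ⟨fun s => s.comap e.symm, fun s => s.comap e, ?_, ?_⟩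
  · intro s; ext a b; simp [Setoid.comap_rel]
  · intro s; ext a b; simp [Setoid.comap_rel]

/-- Iterated `Option`. -/
def iterOpt : ℕ → Type
  | 0 => Empty
  | n+1 => Option (iterOpt n)

theorem iterOpt_equiv : ∀ n, Nonempty (Fin n ≃ iterOpt n)
  | 0 => ⟨finZeroEquiv⟩
  | n+1 => by
    obtain ⟨e⟩ := iterOpt_equiv n
    exact ⟨(finSuccEquiv n).trans e.optionCongr⟩

theorem sum_setoid_iter (n m : ℕ) : ∀ [Fintype (Setoid (iterOpt n))],
    ∑ s : Setoid (iterOpt n), bellAux m (Nat.card (Quotient s)) = bellAux (m+n) 0 := by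
  induction n generalizing m with
  | zero =>
    intro _
    have : IsEmpty (iterOpt 0) := inferInstanceAs (IsEmpty Empty)
    have h0 : ∀ s : Setoid (iterOpt 0), Nat.card (Quotient s) = 0 := by
      intro s
      have : IsEmpty (Quotient s) := ⟨fun q => Quotient.inductionOn q (fun a => isEmptyElim a)⟩
      exact Nat.card_of_isEmpty
    have hc : Fintype.card (Setoid (iterOpt 0)) = 1 := by
      rw [Fintype.card_eq_one_iff]
      exact ⟨⊥, fun s => by ext a; exact isEmptyElim a⟩
    simp [h0, hc]
  | succ n ih =>
    intro inst
    obtain ⟨e⟩ := iterOpt_equiv n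
    have : Fintype (iterOpt n) := Fintype.ofEquiv _ e
    have : Fintype (Setoid (iterOpt n)) := Fintype.ofFinite _
    have h1 := @sum_setoid_step (iterOpt n) _ _ inst m
    rw [ih (m+1)] at h1
    rw [show m + (n+1) = m + 1 + n by ring, ← h1]
    rfl

theorem card_finpartition (n : ℕ) :
    Nat.card (Finpartition (Finset.univ : Finset (Fin n))) = bellAux n 0 := by
  obtain ⟨e⟩ := iterOpt_equiv n
  have : Finite (iterOpt n) := Finite.of_equiv _ e
  have : Fintype (Setoid (iterOpt n)) := Fintype.ofFinite _
  rw [card_finpartition_eq_setoid, card_setoid_congr e]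
  have := sum_setoid_iter n 0
  simp only [bellAux, zero_add] at this
  rw [← this]
  simp

section paths
variable {Y : Type} [DecidableEq Y]

/-- Walks of length `n` with step relations `R i`, starting from `y0`, eventually constant. -/
def WSeq (R : ℕ → Y → Y → Prop) (y0 : Y) (n : ℕ) (f : ℕ → Y) : Prop :=
  f 0 = y0 ∧ (∀ i < n, R i (f i) (f (i+1))) ∧ ∀ j, n ≤ j → f j = f n

theorem walk_zero (R : ℕ → Y → Y → Prop) (y0 b : Y) :
    Finite {f : ℕ → Y // WSeq R y0 0 f ∧ f 0 = b} ∧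
    Nat.card {f : ℕ → Y // WSeq R y0 0 f ∧ f 0 = b} = if b = y0 then 1 else 0 := by
  have hs : Subsingleton {f : ℕ → Y // WSeq R y0 0 f ∧ f 0 = b} := by
    constructor
    rintro ⟨f, hf, h⟩ ⟨g, hg, h'⟩
    apply Subtype.ext
    funext j
    change f j = g j
    rw [hf.2.2 j (Nat.zero_le _), hg.2.2 j (Nat.zero_le _), h, h']
  refine ⟨inferInstance, ?_⟩
  split_ifs with hb
  · subst hb
    rw [Nat.card_eq_one_iff_unique]
    exact ⟨hs, ⟨⟨fun _ => b, ⟨rfl, by simp, by simp⟩, rfl⟩⟩⟩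
  · have : IsEmpty {f : ℕ → Y // WSeq R y0 0 f ∧ f 0 = b} := by
      constructor
      rintro ⟨f, hf, h⟩
      exact hb (h.symm.trans hf.1)
    exact Nat.card_of_isEmpty

theorem walk_bij (R : ℕ → Y → Y → Prop) (y0 : Y) (n : ℕ) (b : Y) (P : Finset Y)
    (hP : ∀ a, a ∈ P ↔ R n a b) :
    ∃ φ : (Σ a : P, {f : ℕ → Y // WSeq R y0 n f ∧ f n = a}) →
      {f : ℕ → Y // WSeq R y0 (n+1) f ∧ f (n+1) = b}, Function.Bijective φ := by
  refine ⟨fun p => ⟨fun j => if j ≤ n then p.2.1 j else b, ⟨?_, ?_, ?_⟩, ?_⟩, ?_, ?_⟩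
  · simpa using p.2.2.1.1
  · intro i hi
    have hi' : i ≤ n := by omega
    beta_reduce
    rw [if_pos hi']
    rcases hi'.eq_or_lt with rfl | h
    · rw [if_neg (by omega), p.2.2.2]
      exact (hP _).1 p.1.2
    · rw [if_pos (by omega)]
      exact p.2.2.1.2.1 i h
  · intro j hj
    beta_reduce
    rw [if_neg (by omega), if_neg (by omega)]
  · beta_reduce
    rw [if_neg (by omega)]
  · rintro ⟨⟨a, ha⟩, ⟨f, hf, hfa⟩⟩ ⟨⟨a', ha'⟩, ⟨g, hg, hga⟩⟩ h
    simp only at hfa hga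
    have h0 : ∀ j ≤ n, f j = g j := by
      intro j hj
      have := congrFun (congrArg Subtype.val h) j
      simpa [hj] using this
    have hfg : f = g := by
      funext j
      rcases le_total j n with hj | hj
      · exact h0 j hj
      · rw [hf.2.2 j hj, hg.2.2 j hj, h0 n le_rfl]
    subst hfg
    have : a = a' := hfa.symm.trans hga
    subst this
    rfl
  · rintro ⟨f, hf, hfb⟩
    refine ⟨⟨⟨f n, (hP _).2 (hfb ▸ hf.2.1 n (by omega))⟩,
      ⟨fun j => f (min j n), ⟨?_, ?_, ?_⟩, ?_⟩⟩, ?_⟩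
    · simpa using hf.1
    · intro i hi
      simp only [min_eq_left (show i ≤ n by omega), min_eq_left (show i + 1 ≤ n by omega)]
      exact hf.2.1 i (by omega)
    · intro j hj
      simp [hj]
    · simp
    · apply Subtype.ext
      funext j
      simp only
      split_ifs with hj
      · rw [min_eq_left hj]
      · rw [← hfb, hf.2.2 j (by omega)]

theorem walk_succ (R : ℕ → Y → Y → Prop) (y0 : Y) (n : ℕ) (b : Y) (P : Finset Y)
    (hP : ∀ a, a ∈ P ↔ R n a b)
    (hfin : ∀ a, Finite {f : ℕ → Y // WSeq R y0 n f ∧ f n = a}) :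
    Finite {f : ℕ → Y // WSeq R y0 (n+1) f ∧ f (n+1) = b} ∧
    Nat.card {f : ℕ → Y // WSeq R y0 (n+1) f ∧ f (n+1) = b} =
      ∑ a ∈ P, Nat.card {f : ℕ → Y // WSeq R y0 n f ∧ f n = a} := by
  obtain ⟨φ, hφ⟩ := walk_bij R y0 n b P hP
  refine ⟨Finite.of_surjective φ hφ.2, ?_⟩
  rw [← Nat.card_eq_of_bijective φ hφ, Nat.card_sigma]
  exact Finset.sum_coe_sort P (fun a => Nat.card {f : ℕ → Y // WSeq R y0 n f ∧ f n = a})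

end paths

theorem yd_finite (n : ℕ) : {μ : YoungDiagram | μ.card ≤ n}.Finite := by
  have hinj : Function.Injective YoungDiagram.cells := fun a b h => YoungDiagram.ext h
  refine Set.Finite.of_finite_image (f := YoungDiagram.cells) ?_ hinj.injOn
  refine ((Finset.range n ×ˢ Finset.range n).powerset.finite_toSet).subset ?_
  rintro _ ⟨μ, hμ, rfl⟩
  simp only [Set.mem_setOf_eq] at hμ
  simp only [Finset.coe_powerset, Set.mem_preimage, Set.mem_powerset_iff, Finset.coe_subset]
  rintro ⟨i, j⟩ hij
  rw [YoungDiagram.mem_cells] at hij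
  simp only [Finset.mem_product, Finset.mem_range]
  constructor
  · have : (Finset.range (i+1)).image (fun x => (x, 0)) ⊆ μ.cells := by
      intro c hc
      simp only [Finset.mem_image, Finset.mem_range] at hc
      obtain ⟨x, hx, rfl⟩ := hc
      exact (YoungDiagram.mem_cells _).2 (μ.up_left_mem (by omega) (by omega) hij)
    have := Finset.card_le_card this
    rw [Finset.card_image_of_injective _ (fun a b h => by simpa using h), Finset.card_range] at this
    exact this.trans hμ
  · have : (Finset.range (j+1)).image (fun x => (0, x)) ⊆ μ.cells := by
      intro c hc
      simp only [Finset.mem_image, Finset.mem_range] at hc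
      obtain ⟨x, hx, rfl⟩ := hc
      exact (YoungDiagram.mem_cells _).2 (μ.up_left_mem (by omega) (by omega) hij)
    have := Finset.card_le_card this
    rw [Finset.card_image_of_injective _ (fun a b h => by simpa using h), Finset.card_range] at this
    exact this.trans hμ

open Classical in
/-- Diagrams with at most `n` boxes. -/
noncomputable def ydT (n : ℕ) : Finset YoungDiagram := (yd_finite n).toFinset

theorem mem_ydT {n : ℕ} {μ : YoungDiagram} : μ ∈ ydT n ↔ μ.card ≤ n := by simp [ydT]

open Classical in
/-- Diagrams obtained by adding a box. -/
noncomputable def ydUp (l : YoungDiagram) : Finset YoungDiagram :=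
  (ydT (l.card + 1)).filter (fun μ => l ≤ μ ∧ μ.card = l.card + 1)

open Classical in
/-- Diagrams obtained by removing a box. -/
noncomputable def ydDown (l : YoungDiagram) : Finset YoungDiagram :=
  (ydT l.card).filter (fun μ => μ ≤ l ∧ l.card = μ.card + 1)

theorem mem_ydUp {l μ : YoungDiagram} : μ ∈ ydUp l ↔ l ≤ μ ∧ μ.card = l.card + 1 := by
  simp only [ydUp, Finset.mem_filter, mem_ydT]
  exact ⟨fun h => h.2, fun h => ⟨h.2.le, h⟩⟩

theorem mem_ydDown {l μ : YoungDiagram} : μ ∈ ydDown l ↔ μ ≤ l ∧ l.card = μ.card + 1 := by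
  simp only [ydDown, Finset.mem_filter, mem_ydT]
  exact ⟨fun h => h.2, fun h => ⟨by omega, h⟩⟩

theorem yd_eq_of_le {a b : YoungDiagram} (h : a ≤ b) (hc : b.card ≤ a.card) : a = b :=
  YoungDiagram.ext (Finset.eq_of_subset_of_card_le (YoungDiagram.cells_subset_iff.2 h) hc)

theorem yd_card_mono {a b : YoungDiagram} (h : a ≤ b) : a.card ≤ b.card :=
  Finset.card_le_card (YoungDiagram.cells_subset_iff.2 h)

theorem yd_card_sup_inf (a b : YoungDiagram) : (a ⊔ b).card + (a ⊓ b).card = a.card + b.card := by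
  simp only [YoungDiagram.card, YoungDiagram.cells_sup, YoungDiagram.cells_inf]
  exact Finset.card_union_add_card_inter _ _

/-- Adding a box to row `i`. -/
def addBox (l : YoungDiagram) (i : ℕ) (h : i = 0 ∨ l.rowLen i < l.rowLen (i-1)) :
    YoungDiagram where
  cells := insert (i, l.rowLen i) l.cells
  isLowerSet := by
    rintro ⟨a1, a2⟩ ⟨b1, b2⟩ hab ha
    have h1 : b1 ≤ a1 := hab.1
    have h2 : b2 ≤ a2 := hab.2
    simp only [Finset.coe_insert, Set.mem_insert_iff, Finset.mem_coe, YoungDiagram.mem_cells,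
      YoungDiagram.mem_iff_lt_rowLen, Prod.mk.injEq] at ha ⊢
    rcases ha with ⟨rfl, rfl⟩ | ha
    · by_cases hb : b1 = a1
      · subst hb
        omega
      · right
        have := l.rowLen_anti b1 (a1 - 1) (by omega)
        omega
    · right
      have := l.rowLen_anti _ _ h1
      omega

/-- Removing a box from row `i`. -/
def delBox (l : YoungDiagram) (i : ℕ) (h : l.rowLen (i+1) < l.rowLen i) :
    YoungDiagram where
  cells := l.cells.erase (i, l.rowLen i - 1)
  isLowerSet := by
    rintro ⟨a1, a2⟩ ⟨b1, b2⟩ hab ha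
    have h1 : b1 ≤ a1 := hab.1
    have h2 : b2 ≤ a2 := hab.2
    simp only [Finset.coe_erase, Set.mem_diff, Set.mem_singleton_iff, Finset.mem_coe,
      YoungDiagram.mem_cells, YoungDiagram.mem_iff_lt_rowLen, Prod.mk.injEq] at ha ⊢
    have h3 := l.rowLen_anti _ _ h1
    refine ⟨by omega, ?_⟩
    rintro ⟨rfl, rfl⟩
    by_cases hb : a1 = b1
    · subst hb
      omega
    · have := l.rowLen_anti (b1+1) a1 (by omega)
      omega

open Classical in
theorem card_ydUp (l : YoungDiagram) (N : ℕ) (hN : ∀ i, N ≤ i → l.rowLen i = 0) :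
    (ydUp l).card =
      ((Finset.range (N+1)).filter (fun i => i = 0 ∨ l.rowLen i < l.rowLen (i-1))).card := by
  symm
  refine Finset.card_bij (fun i hi => addBox l i (Finset.mem_filter.1 hi).2) ?_ ?_ ?_
  · intro i hi
    rw [mem_ydUp]
    constructor
    · rw [← YoungDiagram.cells_subset_iff]
      exact Finset.subset_insert _ _
    · refine Finset.card_insert_of_notMem ?_
      rw [YoungDiagram.mem_cells, YoungDiagram.mem_iff_lt_rowLen]
      exact lt_irrefl _
  · intro i hi j hj h
    have h1 : insert (i, l.rowLen i) l.cells = insert (j, l.rowLen j) l.cells :=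
      congrArg YoungDiagram.cells h
    have h2 : (i, l.rowLen i) ∈ insert (j, l.rowLen j) l.cells :=
      h1 ▸ Finset.mem_insert_self _ _
    simp only [Finset.mem_insert, YoungDiagram.mem_cells, YoungDiagram.mem_iff_lt_rowLen,
      Prod.mk.injEq, lt_irrefl, or_false] at h2
    exact h2.1
  · intro μ hμ
    rw [mem_ydUp] at hμ
    obtain ⟨hle, hc⟩ := hμ
    have hsub := YoungDiagram.cells_subset_iff.2 hle
    have : (μ.cells \ l.cells).card = 1 := by
      rw [Finset.card_sdiff_of_subset hsub]
      unfold YoungDiagram.card at hc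
      omega
    obtain ⟨⟨i, j⟩, hij⟩ := Finset.card_eq_one.1 this
    have key : ∀ x y, (x, y) ∈ μ ∧ (x, y) ∉ l ↔ x = i ∧ y = j := by
      intro x y
      have := Finset.ext_iff.1 hij (x, y)
      simpa using this
    have hm := (key i j).2 ⟨rfl, rfl⟩
    have hlm : ∀ x y, (x, y) ∈ l → (x, y) ∈ μ := fun x y h => hle h
    have hj : j = l.rowLen i := by
      have h1 : l.rowLen i ≤ j := by
        have := hm.2
        rw [YoungDiagram.mem_iff_lt_rowLen] at this
        omega
      have h2 : (i, l.rowLen i) ∈ μ := μ.up_left_mem le_rfl h1 hm.1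
      have h3 : (i, l.rowLen i) ∉ l := by
        rw [YoungDiagram.mem_iff_lt_rowLen]; omega
      exact ((key _ _).1 ⟨h2, h3⟩).2.symm
    have hadd : i = 0 ∨ l.rowLen i < l.rowLen (i-1) := by
      by_contra hcon
      push Not at hcon
      have h2 : (i-1, j) ∈ μ := μ.up_left_mem (by omega) le_rfl hm.1
      have h3 : (i-1, j) ∉ l := by
        rw [YoungDiagram.mem_iff_lt_rowLen]; omega
      have := ((key _ _).1 ⟨h2, h3⟩).1
      omega
    have hiN : i < N + 1 := by
      by_contra hcon
      have := hN i (by omega)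
      have := hN (i-1) (by omega)
      omega
    refine ⟨i, Finset.mem_filter.2 ⟨Finset.mem_range.2 hiN, hadd⟩, ?_⟩
    apply YoungDiagram.ext
    change insert (i, l.rowLen i) l.cells = μ.cells
    rw [← hj]
    ext ⟨x, y⟩
    simp only [Finset.mem_insert, YoungDiagram.mem_cells, Prod.mk.injEq]
    have := key x y
    have := hlm x y
    tauto

open Classical in
theorem card_ydDown (l : YoungDiagram) (N : ℕ) (hN : ∀ i, N ≤ i → l.rowLen i = 0) :
    (ydDown l).card =
      ((Finset.range N).filter (fun i => l.rowLen (i+1) < l.rowLen i)).card := by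
  symm
  refine Finset.card_bij (fun i hi => delBox l i (Finset.mem_filter.1 hi).2) ?_ ?_ ?_
  · intro i hi
    have hi2 := (Finset.mem_filter.1 hi).2
    rw [mem_ydDown]
    constructor
    · rw [← YoungDiagram.cells_subset_iff]
      exact Finset.erase_subset _ _
    · refine (Finset.card_erase_add_one ?_).symm
      rw [YoungDiagram.mem_cells, YoungDiagram.mem_iff_lt_rowLen]
      omega
  · intro i hi j hj h
    have hi2 := (Finset.mem_filter.1 hi).2
    have h1 : l.cells.erase (i, l.rowLen i - 1) = l.cells.erase (j, l.rowLen j - 1) :=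
      congrArg YoungDiagram.cells h
    have h2 : (i, l.rowLen i - 1) ∉ l.cells.erase (j, l.rowLen j - 1) :=
      h1 ▸ Finset.notMem_erase _ _
    simp only [Finset.mem_erase, YoungDiagram.mem_cells, YoungDiagram.mem_iff_lt_rowLen,
      Prod.mk.injEq, ne_eq, not_and, not_not] at h2
    by_contra hne
    exact h2 (by tauto) (by omega)
  · intro μ hμ
    rw [mem_ydDown] at hμ
    obtain ⟨hle, hc⟩ := hμ
    have hsub := YoungDiagram.cells_subset_iff.2 hle
    have : (l.cells \ μ.cells).card = 1 := by
      rw [Finset.card_sdiff_of_subset hsub]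
      unfold YoungDiagram.card at hc
      omega
    obtain ⟨⟨i, j⟩, hij⟩ := Finset.card_eq_one.1 this
    have key : ∀ x y, (x, y) ∈ l ∧ (x, y) ∉ μ ↔ x = i ∧ y = j := by
      intro x y
      have := Finset.ext_iff.1 hij (x, y)
      simpa using this
    have hm := (key i j).2 ⟨rfl, rfl⟩
    have hlm : ∀ x y, (x, y) ∈ μ → (x, y) ∈ l := fun x y h => hle h
    have hjl : j < l.rowLen i := YoungDiagram.mem_iff_lt_rowLen.1 hm.1
    have hj : j = l.rowLen i - 1 := by
      have h2 : (i, l.rowLen i - 1) ∈ l := by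
        rw [YoungDiagram.mem_iff_lt_rowLen]; omega
      have h3 : (i, l.rowLen i - 1) ∉ μ := fun h => hm.2 (μ.up_left_mem le_rfl (by omega) h)
      exact ((key _ _).1 ⟨h2, h3⟩).2.symm
    have hadd : l.rowLen (i+1) < l.rowLen i := by
      by_contra hcon
      have h2 : (i+1, j) ∈ l := by
        rw [YoungDiagram.mem_iff_lt_rowLen]; omega
      have h3 : (i+1, j) ∉ μ := fun h => hm.2 (μ.up_left_mem (by omega) le_rfl h)
      have := ((key _ _).1 ⟨h2, h3⟩).1
      omega
    have hiN : i < N := by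
      by_contra hcon
      have := hN i (by omega)
      omega
    refine ⟨i, Finset.mem_filter.2 ⟨Finset.mem_range.2 hiN, hadd⟩, ?_⟩
    apply YoungDiagram.ext
    change l.cells.erase (i, l.rowLen i - 1) = μ.cells
    rw [← hj]
    ext ⟨x, y⟩
    simp only [Finset.mem_erase, YoungDiagram.mem_cells, ne_eq, Prod.mk.injEq]
    have := key x y
    have := hlm x y
    tauto

theorem card_up_down (l : YoungDiagram) : (ydUp l).card = (ydDown l).card + 1 := by
  classical
  have hN : ∀ i, l.colLen 0 ≤ i → l.rowLen i = 0 := by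
    intro i hi
    by_contra h
    have : (i, 0) ∈ l := YoungDiagram.mem_iff_lt_rowLen.2 (by omega)
    rw [YoungDiagram.mem_iff_lt_colLen] at this
    omega
  rw [card_ydUp l _ hN, card_ydDown l _ hN]
  set N := l.colLen 0
  have : (Finset.range (N+1)).filter (fun i => i = 0 ∨ l.rowLen i < l.rowLen (i-1)) =
      insert 0 (((Finset.range N).filter (fun i => l.rowLen (i+1) < l.rowLen i)).image
        Nat.succ) := by
    ext i
    cases i with
    | zero => simp
    | succ i => simp
  rw [this, Finset.card_insert_of_notMem (by simp),
    Finset.card_image_of_injective _ Nat.succ_injective]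

/-- `DU = UD + 1`. -/
theorem yd_comm (f : YoungDiagram → ℕ) (l : YoungDiagram) :
    ∑ μ ∈ ydUp l, ∑ ν ∈ ydDown μ, f ν = (∑ μ ∈ ydDown l, ∑ ν ∈ ydUp μ, f ν) + f l := by
  classical
  have h1 : ∑ μ ∈ ydUp l, ∑ ν ∈ ydDown μ, f ν =
      (ydUp l).card * f l + ∑ μ ∈ ydUp l, ∑ ν ∈ (ydDown μ).erase l, f ν := by
    rw [← smul_eq_mul, ← Finset.sum_const, ← Finset.sum_add_distrib]
    refine Finset.sum_congr rfl fun μ hμ => ?_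
    rw [Finset.add_sum_erase]
    rw [mem_ydUp] at hμ
    exact mem_ydDown.2 hμ
  have h2 : ∑ μ ∈ ydDown l, ∑ ν ∈ ydUp μ, f ν =
      (ydDown l).card * f l + ∑ μ ∈ ydDown l, ∑ ν ∈ (ydUp μ).erase l, f ν := by
    rw [← smul_eq_mul, ← Finset.sum_const, ← Finset.sum_add_distrib]
    refine Finset.sum_congr rfl fun μ hμ => ?_
    rw [Finset.add_sum_erase]
    rw [mem_ydDown] at hμ
    exact mem_ydUp.2 hμ
  have h3 : ∑ μ ∈ ydUp l, ∑ ν ∈ (ydDown μ).erase l, f ν =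
      ∑ μ ∈ ydDown l, ∑ ν ∈ (ydUp μ).erase l, f ν := by
    rw [Finset.sum_sigma', Finset.sum_sigma']
    have up_eq : ∀ μ ν, μ ∈ ydUp l → ν ∈ ydDown μ → ν ≠ l →
        l ⊔ ν = μ ∧ (l ⊓ ν).card + 1 = l.card ∧ ν.card = l.card := by
      intro μ ν hμ hν hne
      rw [mem_ydUp] at hμ
      rw [mem_ydDown] at hν
      have hle : l ⊔ ν ≤ μ := sup_le hμ.1 hν.1
      have hc := yd_card_sup_inf l ν
      have hlt : l.card < (l ⊔ ν).card := by
        by_contra hcon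
        have e1 := yd_eq_of_le (le_sup_left : l ≤ l ⊔ ν) (by omega)
        have e2 : ν ≤ l := by rw [e1]; exact le_sup_right
        exact hne (yd_eq_of_le e2 (by omega))
      have hm := yd_card_mono hle
      exact ⟨yd_eq_of_le hle (by omega), by omega, by omega⟩
    have dn_eq : ∀ μ ν, μ ∈ ydDown l → ν ∈ ydUp μ → ν ≠ l →
        l ⊓ ν = μ ∧ (l ⊔ ν).card = l.card + 1 ∧ ν.card = l.card := by
      intro μ ν hμ hν hne
      rw [mem_ydDown] at hμ
      rw [mem_ydUp] at hν
      have hle : μ ≤ l ⊓ ν := le_inf hμ.1 hν.1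
      have hc := yd_card_sup_inf l ν
      have hlt : (l ⊓ ν).card < l.card := by
        by_contra hcon
        have e1 := yd_eq_of_le (inf_le_left : l ⊓ ν ≤ l) (by omega)
        have e2 : l ≤ ν := by rw [← e1]; exact inf_le_right
        exact hne (yd_eq_of_le e2 (by omega)).symm
      have hm := yd_card_mono hle
      exact ⟨(yd_eq_of_le hle (by omega)).symm, by omega, by omega⟩
    refine Finset.sum_bij' (fun p _ => ⟨l ⊓ p.2, p.2⟩) (fun p _ => ⟨l ⊔ p.2, p.2⟩) ?_ ?_ ?_ ?_ ?_
    · rintro ⟨μ, ν⟩ h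
      simp only [Finset.mem_sigma, Finset.mem_erase] at h ⊢
      obtain ⟨e, c1, c2⟩ := up_eq μ ν h.1 h.2.2 h.2.1
      exact ⟨mem_ydDown.2 ⟨inf_le_left, c1.symm⟩, h.2.1, mem_ydUp.2 ⟨inf_le_right, by omega⟩⟩
    · rintro ⟨μ, ν⟩ h
      simp only [Finset.mem_sigma, Finset.mem_erase] at h ⊢
      obtain ⟨e, c1, c2⟩ := dn_eq μ ν h.1 h.2.2 h.2.1
      exact ⟨mem_ydUp.2 ⟨le_sup_left, c1⟩, h.2.1, mem_ydDown.2 ⟨le_sup_right, by omega⟩⟩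
    · rintro ⟨μ, ν⟩ h
      simp only [Finset.mem_sigma, Finset.mem_erase] at h ⊢
      rw [(up_eq μ ν h.1 h.2.2 h.2.1).1]
    · rintro ⟨μ, ν⟩ h
      simp only [Finset.mem_sigma, Finset.mem_erase] at h ⊢
      rw [(dn_eq μ ν h.1 h.2.2 h.2.1).1]
    · rintro ⟨μ, ν⟩ h
      rfl
  rw [h1, h2, h3, card_up_down]
  ring

/-- Step relation of vacillating tableaux. -/
def VStep (i : ℕ) (a b : YoungDiagram) : Prop :=
  if i % 2 = 0 then b ≤ a ∧ a.card ≤ b.card + 1 else a ≤ b ∧ b.card ≤ a.card + 1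

theorem vacSeq_iff (k : ℕ) (f : ℕ → YoungDiagram) : VacSeq k f ↔ WSeq VStep ⊥ (2*k) f := by
  unfold VacSeq WSeq
  constructor
  · rintro ⟨h0, h1, h2, h3⟩
    refine ⟨h0, ?_, h3⟩
    intro i hi
    rcases Nat.even_or_odd' i with ⟨c, rfl | rfl⟩
    · have := h1 c (by omega)
      simpa [VStep] using this
    · have := h2 c (by omega)
      have e : (2 * c + 1) % 2 ≠ 0 := by omega
      simpa [VStep, e] using this
  · rintro ⟨h0, h1, h3⟩
    refine ⟨h0, ?_, ?_, h3⟩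
    · intro i hi
      have := h1 (2*i) (by omega)
      simpa [VStep] using this
    · intro i hi
      have := h1 (2*i+1) (by omega)
      have e : (2 * i + 1) % 2 ≠ 0 := by omega
      simpa [VStep, e] using this

/-- The number of walks. -/
noncomputable def nW (n : ℕ) (l : YoungDiagram) : ℕ :=
  Nat.card {f : ℕ → YoungDiagram // WSeq VStep ⊥ n f ∧ f n = l}

theorem mVT_eq (k : ℕ) (l : YoungDiagram) : mVT k l = nW (2*k) l := by
  unfold mVT nW
  simp only [vacSeq_iff]

open Classical in
theorem vstep_pred (n : ℕ) (b : YoungDiagram) : ∀ a,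
    a ∈ insert b (if n % 2 = 0 then ydUp b else ydDown b) ↔ VStep n a b := by
  intro a
  unfold VStep
  split_ifs with h
  · rw [Finset.mem_insert, mem_ydUp]
    constructor
    · rintro (rfl | h)
      · exact ⟨le_rfl, by omega⟩
      · exact ⟨h.1, by omega⟩
    · rintro ⟨h1, h2⟩
      by_cases hc : a.card ≤ b.card
      · exact Or.inl (yd_eq_of_le h1 hc).symm
      · exact Or.inr ⟨h1, by omega⟩
  · rw [Finset.mem_insert, mem_ydDown]
    constructor
    · rintro (rfl | h)
      · exact ⟨le_rfl, by omega⟩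
      · exact ⟨h.1, by omega⟩
    · rintro ⟨h1, h2⟩
      by_cases hc : b.card ≤ a.card
      · exact Or.inl (yd_eq_of_le h1 hc)
      · exact Or.inr ⟨h1, by omega⟩

theorem walks_finite (n : ℕ) : ∀ l : YoungDiagram,
    Finite {f : ℕ → YoungDiagram // WSeq VStep ⊥ n f ∧ f n = l} := by
  classical
  induction n with
  | zero => exact fun l => (walk_zero VStep ⊥ l).1
  | succ n ih => exact fun l => (walk_succ VStep ⊥ n l _ (vstep_pred n l) ih).1

/-- Down operator on functions. -/
noncomputable def opD : Module.End ℕ (YoungDiagram → ℕ) where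
  toFun f l := ∑ μ ∈ ydUp l, f μ
  map_add' f g := by funext l; simp [Finset.sum_add_distrib]
  map_smul' c f := by funext l; simp [Finset.mul_sum]

/-- Up operator on functions. -/
noncomputable def opU : Module.End ℕ (YoungDiagram → ℕ) where
  toFun f l := ∑ μ ∈ ydDown l, f μ
  map_add' f g := by funext l; simp [Finset.sum_add_distrib]
  map_smul' c f := by funext l; simp [Finset.mul_sum]

theorem opD_apply (f : YoungDiagram → ℕ) (l : YoungDiagram) : opD f l = ∑ μ ∈ ydUp l, f μ := rfl
theorem opU_apply (f : YoungDiagram → ℕ) (l : YoungDiagram) : opU f l = ∑ μ ∈ ydDown l, f μ := rfl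

theorem opDU (f : YoungDiagram → ℕ) : opD (opU f) = opU (opD f) + f := by
  funext l
  exact yd_comm f l

/-- The full step operator. -/
noncomputable def opW : Module.End ℕ (YoungDiagram → ℕ) := (1 + opU) * (1 + opD)

theorem opW_apply (f : YoungDiagram → ℕ) : opW f = (f + opD f) + opU (f + opD f) := rfl

theorem nW_even (n : ℕ) (h : n % 2 = 0) : nW (n+1) = nW n + opD (nW n) := by
  classical
  funext l
  have := (walk_succ VStep ⊥ n l _ (vstep_pred n l) (walks_finite n)).2
  change nW (n+1) l = ∑ a ∈ _, nW n a at this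
  rw [this, if_pos h, Finset.sum_insert]
  · rfl
  · rw [mem_ydUp]; omega

theorem nW_odd (n : ℕ) (h : n % 2 ≠ 0) : nW (n+1) = nW n + opU (nW n) := by
  classical
  funext l
  have := (walk_succ VStep ⊥ n l _ (vstep_pred n l) (walks_finite n)).2
  change nW (n+1) l = ∑ a ∈ _, nW n a at this
  rw [this, if_neg h, Finset.sum_insert]
  · rfl
  · rw [mem_ydDown]; omega

theorem nW_step (k : ℕ) : nW (2*(k+1)) = opW (nW (2*k)) := by
  rw [show 2*(k+1) = 2*k+1+1 by ring, nW_odd _ (by omega), nW_even _ (by omega), opW_apply]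

/-- The vectors `(1+U)^m δ_⊥`. -/
noncomputable def eV (m : ℕ) : YoungDiagram → ℕ := ((1 + opU)^m : Module.End ℕ _) (nW 0)

theorem eV_succ (m : ℕ) : eV (m+1) = eV m + opU (eV m) := by
  unfold eV
  rw [pow_succ']
  rfl

theorem yd_card_bot : (⊥ : YoungDiagram).card = 0 := rfl

open Classical in
theorem nW_zero (l : YoungDiagram) : nW 0 l = if l = ⊥ then 1 else 0 := by
  rw [← (walk_zero VStep ⊥ l).2]
  rfl

theorem opD_zero : opD (nW 0) = 0 := by
  classical
  funext l
  rw [opD_apply]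
  refine Finset.sum_eq_zero fun μ hμ => ?_
  rw [nW_zero, if_neg]
  rintro rfl
  rw [mem_ydUp, yd_card_bot] at hμ
  omega

theorem opU_bot (f : YoungDiagram → ℕ) : opU f ⊥ = 0 := by
  rw [opU_apply]
  refine Finset.sum_eq_zero fun μ hμ => ?_
  rw [mem_ydDown, yd_card_bot] at hμ
  omega

theorem eV_bot (m : ℕ) : eV m ⊥ = 1 := by
  classical
  induction m with
  | zero => change nW 0 ⊥ = 1; rw [nW_zero, if_pos rfl]
  | succ m ih => rw [eV_succ, Pi.add_apply, ih, opU_bot]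

theorem opD_eV (m : ℕ) : opD (eV (m+1)) = (m+1) • eV m := by
  induction m with
  | zero =>
    have h0 : opD (eV 0) = 0 := opD_zero
    rw [eV_succ, map_add, opDU, h0, map_zero]
    simp
  | succ m ih =>
    rw [eV_succ, map_add, opDU, ih, map_nsmul, eV_succ m]
    simp only [smul_add, add_smul, one_smul]
    abel

theorem opW_eV (m : ℕ) : opW (eV m) = eV (m+1) + m • eV m := by
  cases m with
  | zero =>
    have h0 : opD (eV 0) = 0 := opD_zero
    rw [opW_apply, h0, eV_succ]
    simp
  | succ m =>
    rw [opW_apply, opD_eV, map_add, map_nsmul, eV_succ (m+1)]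
    have h : (m+1) • eV (m+1) = (m+1) • eV m + (m+1) • opU (eV m) := by
      rw [eV_succ m, smul_add]
    rw [h]
    abel

theorem opW_pow_bot (n m : ℕ) : (opW^n : Module.End ℕ _) (eV m) ⊥ = bellAux n m := by
  induction n generalizing m with
  | zero => exact eV_bot m
  | succ n ih =>
    rw [pow_succ, Module.End.mul_apply, opW_eV, map_add, map_nsmul, Pi.add_apply, Pi.smul_apply,
      ih, ih, bellAux, smul_eq_mul]

theorem nW_eq_pow (k : ℕ) : nW (2*k) = (opW^k : Module.End ℕ _) (eV 0) := by
  induction k with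
  | zero => rfl
  | succ k ih => rw [nW_step, ih, pow_succ']; rfl

theorem nW_bot (k : ℕ) : nW (2*k) ⊥ = bellAux k 0 := by
  rw [nW_eq_pow, opW_pow_bot]

theorem nW_support (k : ℕ) : ∀ l : YoungDiagram, k < l.card → nW (2*k) l = 0 := by
  classical
  induction k with
  | zero =>
    intro l hl
    rw [mul_zero, nW_zero, if_neg]
    rintro rfl
    rw [yd_card_bot] at hl
    omega
  | succ k ih =>
    have hD : ∀ l : YoungDiagram, k < l.card → (nW (2*k) + opD (nW (2*k))) l = 0 := by
      intro l hl
      rw [Pi.add_apply, ih l hl, opD_apply, zero_add]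
      refine Finset.sum_eq_zero fun μ hμ => ih _ ?_
      rw [mem_ydUp] at hμ
      omega
    intro l hl
    rw [nW_step, opW_apply, Pi.add_apply, hD l (by omega), opU_apply, zero_add]
    refine Finset.sum_eq_zero fun μ hμ => hD _ ?_
    rw [mem_ydDown] at hμ
    omega

/-- Truncated pairing. -/
noncomputable def pr (M : ℕ) (f g : YoungDiagram → ℕ) : ℕ := ∑ l ∈ ydT M, f l * g l

theorem pr_comm (M : ℕ) (f g : YoungDiagram → ℕ) : pr M f g = pr M g f :=
  Finset.sum_congr rfl fun _ _ => mul_comm _ _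

theorem pr_add_left (M : ℕ) (f f' g : YoungDiagram → ℕ) :
    pr M (f + f') g = pr M f g + pr M f' g := by
  simp [pr, add_mul, Finset.sum_add_distrib]

theorem pr_U (M : ℕ) (f g : YoungDiagram → ℕ) (hg : ∀ l : YoungDiagram, M < l.card → g l = 0) :
    pr M (opU f) g = pr M f (opD g) := by
  classical
  unfold pr
  simp only [opU_apply, opD_apply, Finset.sum_mul, Finset.mul_sum]
  have : ∀ μ, ∑ l ∈ ydUp μ, f μ * g l = ∑ l ∈ (ydUp μ).filter (· ∈ ydT M), f μ * g l := by
    intro μ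
    rw [Finset.sum_filter]
    refine Finset.sum_congr rfl fun l _ => ?_
    split_ifs with h
    · rfl
    · rw [mem_ydT] at h
      rw [hg l (by omega), mul_zero]
  simp only [this]
  refine Finset.sum_comm' ?_
  intro x y
  simp only [Finset.mem_filter, mem_ydT, mem_ydUp, mem_ydDown]
  constructor
  · rintro ⟨h1, h2, h3⟩; exact ⟨⟨⟨h2, h3⟩, h1⟩, by omega⟩
  · rintro ⟨⟨⟨h2, h3⟩, h1⟩, h4⟩; exact ⟨h1, h2, h3⟩

theorem pr_W (M : ℕ) (f g : YoungDiagram → ℕ) (hf : ∀ l : YoungDiagram, M < l.card → f l = 0)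
    (hg : ∀ l : YoungDiagram, M < l.card → g l = 0) :
    pr M (opW f) g = pr M f (opW g) := by
  have key : ∀ f g : YoungDiagram → ℕ, (∀ l : YoungDiagram, M < l.card → g l = 0) →
      pr M (opW f) g = pr M (f + opD f) (g + opD g) := by
    intro f g hg
    rw [opW_apply, pr_add_left, pr_U _ _ _ hg, pr_comm M (f + opD f) (g + opD g),
      pr_add_left M g, pr_comm M g, pr_comm M (opD g)]
  rw [key f g hg, pr_comm M f, key g f hf, pr_comm]

theorem pr_shift (M i j : ℕ) (hj : i + j ≤ M) :
    pr M (nW (2*i)) (nW (2*j)) = nW (2*(i+j)) ⊥ := by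
  classical
  induction i generalizing j with
  | zero =>
    unfold pr
    simp only [mul_zero, nW_zero, zero_add, ite_mul, one_mul, zero_mul]
    rw [Finset.sum_ite_eq', if_pos]
    rw [mem_ydT, yd_card_bot]
    omega
  | succ i ih =>
    rw [nW_step, pr_W, ← nW_step, ih _ (by omega), show i + (j+1) = i+1+j by ring]
    · exact fun l hl => nW_support i l (by omega)
    · exact fun l hl => nW_support j l (by omega)

theorem bell_eq_sum_sq_vacillating (k : ℕ) :
    Nat.card (Finpartition (Finset.univ : Finset (Fin (2*k)))) =
      ∑ᶠ lam ∈ {lam : YoungDiagram | lam.card ≤ k}, (mVT k lam)^2 := by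
  rw [card_finpartition, ← nW_bot, two_mul k, ← pr_shift (k+k) k k le_rfl]
  have hset : {lam : YoungDiagram | lam.card ≤ k} = ↑(ydT k) := by
    ext l; simp [mem_ydT]
  rw [hset, finsum_mem_coe_finset]
  unfold pr
  symm
  simp only [mVT_eq, sq]
  refine Finset.sum_subset ?_ ?_
  · intro l hl
    rw [mem_ydT] at hl ⊢
    omega
  · intro l _ hl
    rw [mem_ydT] at hl
    rw [nW_support k l (by omega), mul_zero]
end

section
/- The number of noncrossing set partitions of {1, 2, ..., n} equals the Catalan number C(n) = binom(2n, n)/(n+1). -/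
/-- A set partition of `{0, ..., n-1}` is noncrossing if there are no
`a < b < c < d` with `a, c` in one block and `b, d` in a different block. -/
def IsNoncrossing {n : ℕ} (P : Finpartition (Finset.univ : Finset (Fin n))) : Prop :=
  ¬ ∃ a b c d : Fin n, a < b ∧ b < c ∧ c < d ∧
    ∃ B ∈ P.parts, ∃ B' ∈ P.parts, B ≠ B' ∧ a ∈ B ∧ c ∈ B ∧ b ∈ B' ∧ d ∈ B'

/-- Noncrossing equivalence relations on `ℕ` which are trivial outside `[a, b)`. -/
structure NCRel (a b : ℕ) (r : ℕ → ℕ → Prop) : Prop where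
  refl : ∀ x, r x x
  symm : ∀ x y, r x y → r y x
  trans : ∀ x y z, r x y → r y z → r x z
  supp : ∀ x y, r x y → x = y ∨ (a ≤ x ∧ x < b ∧ a ≤ y ∧ y < b)
  nc : ∀ x y z w, x < y → y < z → z < w → r x z → r y w → r x y

/-- Glue a relation on `[a+1, M]` and one on `[M+1, b)`, attaching `a` to `M`. -/
def glueRel (a M : ℕ) (q s : ℕ → ℕ → Prop) (x y : ℕ) : Prop :=
  q (if x = a then M else x) (if y = a then M else y) ∨ s x y

theorem glue_NC {a M b : ℕ} {q s : ℕ → ℕ → Prop} (hM : a ≤ M) (hb : M < b)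
    (hq : NCRel (a+1) (M+1) q) (hs : NCRel (M+1) b s) : NCRel a b (glueRel a M q s) := by
  have q' : ∀ x y, q (if x = a then M else x) (if y = a then M else y) →
      x = y ∨ (a ≤ x ∧ x ≤ M ∧ a ≤ y ∧ y ≤ M) := by
    intro x y h
    have := hq.supp _ _ h
    split_ifs at this <;> omega
  refine ⟨fun x => Or.inl (hq.refl _), ?_, ?_, ?_, ?_⟩
  · rintro x y (h | h)
    · exact Or.inl (hq.symm _ _ h)
    · exact Or.inr (hs.symm _ _ h)
  · rintro x y z (h | h) (h' | h')
    · exact Or.inl (hq.trans _ _ _ h h')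
    · rcases q' _ _ h with rfl | h1
      · exact Or.inr h'
      rcases hs.supp _ _ h' with rfl | h2
      · exact Or.inl h
      omega
    · rcases q' _ _ h' with rfl | h1
      · exact Or.inr h
      rcases hs.supp _ _ h with rfl | h2
      · exact Or.inl h'
      omega
    · exact Or.inr (hs.trans _ _ _ h h')
  · rintro x y (h | h)
    · have := q' _ _ h; omega
    · have := hs.supp _ _ h; omega
  · rintro x y z w h1 h2 h3 (h | h) (h' | h')
    · have e1 := q' _ _ h
      have e2 := q' _ _ h'
      left
      have hy : y ≠ a := by omega
      have hz : z ≠ a := by omega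
      have hw : w ≠ a := by omega
      simp only [hy, hz, hw, if_false] at h h' ⊢
      by_cases hx : x = a
      · simp only [hx, if_true] at h ⊢
        by_cases hwM : w = M
        · subst hwM; exact hq.symm _ _ h'
        · exact hq.trans _ _ _ h (hq.trans _ _ _ (hq.symm _ _ (hq.nc y z w M h2 h3 (by omega) h' (hq.symm _ _ h))) (hq.refl _)) 
      · simp only [hx, if_false] at h ⊢
        exact hq.nc _ _ _ _ h1 h2 h3 h h'
    · have e1 := q' _ _ h
      have e2 := hs.supp _ _ h'
      omega
    · have e1 := q' _ _ h'
      have e2 := hs.supp _ _ h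
      omega
    · exact Or.inr (hs.nc _ _ _ _ h1 h2 h3 h h')

theorem glue_max {a M b : ℕ} {q s : ℕ → ℕ → Prop} (hM : a ≤ M)
    (hq : NCRel (a+1) (M+1) q) (hs : NCRel (M+1) b s) :
    glueRel a M q s a M ∧ ∀ x, glueRel a M q s a x → x ≤ M := by
  constructor
  · left
    have : (if M = a then M else M) = M := by simp
    simp only [this, if_true]
    exact hq.refl _
  · rintro x (h | h)
    · have := hq.supp _ _ h
      split_ifs at this <;> omega
    · have := hs.supp _ _ h
      omega

theorem glue_left {a M b : ℕ} {q s : ℕ → ℕ → Prop} (hM : a ≤ M)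
    (hq : NCRel (a+1) (M+1) q) (hs : NCRel (M+1) b s) (x y : ℕ) :
    q x y ↔ x = y ∨ (a < x ∧ x ≤ M ∧ a < y ∧ y ≤ M ∧ glueRel a M q s x y) := by
  constructor
  · intro h
    rcases hq.supp _ _ h with h1 | h1
    · exact Or.inl h1
    · right
      refine ⟨by omega, by omega, by omega, by omega, Or.inl ?_⟩
      rw [if_neg (by omega), if_neg (by omega)]; exact h
  · rintro (rfl | ⟨h1, h2, h3, h4, h | h⟩)
    · exact hq.refl _
    · rw [if_neg (by omega), if_neg (by omega)] at h; exact h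
    · rcases hs.supp _ _ h with rfl | h
      · exact hq.refl _
      · omega

theorem glue_right {a M b : ℕ} {q s : ℕ → ℕ → Prop} (hM : a ≤ M)
    (hq : NCRel (a+1) (M+1) q) (hs : NCRel (M+1) b s) (x y : ℕ) :
    s x y ↔ x = y ∨ (M < x ∧ M < y ∧ glueRel a M q s x y) := by
  constructor
  · intro h
    rcases hs.supp _ _ h with h1 | h1
    · exact Or.inl h1
    · exact Or.inr ⟨by omega, by omega, Or.inr h⟩
  · rintro (rfl | ⟨h1, h2, h | h⟩)
    · exact hs.refl _
    · rw [if_neg (by omega), if_neg (by omega)] at h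
      rcases hq.supp _ _ h with rfl | h
      · exact hs.refl _
      · omega
    · exact h

theorem exists_glue {a b : ℕ} {r : ℕ → ℕ → Prop} (hab : a < b) (hr : NCRel a b r) :
    ∃ M q s, a ≤ M ∧ M < b ∧ NCRel (a+1) (M+1) q ∧ NCRel (M+1) b s ∧ glueRel a M q s = r := by
  classical
  let F := (Finset.range b).filter (fun x => r a x)
  have haF : a ∈ F := by simp [F, hab, hr.refl]
  have hne : F.Nonempty := ⟨a, haF⟩
  obtain ⟨M, hMdef⟩ : ∃ M, M = F.max' hne := ⟨_, rfl⟩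
  have hMF : M ∈ F := hMdef ▸ F.max'_mem hne
  have haM : a ≤ M := hMdef ▸ F.le_max' a haF
  have hMb : M < b := by simp [F] at hMF; exact hMF.1
  have hM : r a M := by simp [F] at hMF; exact hMF.2
  have hmax : ∀ x, r a x → x ≤ M := by
    intro x hx
    have := hr.supp _ _ hx
    rw [hMdef]
    apply F.le_max'
    simp only [F, Finset.mem_filter, Finset.mem_range]
    exact ⟨by omega, hx⟩
  have hsep : ∀ x y, r x y → a ≤ x → x ≤ M → y ≤ M := by
    intro x y h h1 h2
    by_contra h3
    have hax : r a x := by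
      by_cases e : x = a
      · subst e; exact hr.refl _
      by_cases e' : x = M
      · subst e'; exact hM
      exact hr.nc a x M y (by omega) (by omega) (by omega) hM h
    exact h3 (hmax y (hr.trans _ _ _ hax h))
  refine ⟨M, fun x y => x = y ∨ (a < x ∧ x ≤ M ∧ a < y ∧ y ≤ M ∧ r x y),
    fun x y => x = y ∨ (M < x ∧ M < y ∧ r x y), haM, hMb, ?_, ?_, ?_⟩
  · refine ⟨fun x => Or.inl rfl, ?_, ?_, ?_, ?_⟩
    · rintro x y (rfl | h)
      · exact Or.inl rfl
      · exact Or.inr ⟨h.2.2.1, h.2.2.2.1, h.1, h.2.1, hr.symm _ _ h.2.2.2.2⟩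
    · rintro x y z (rfl | h) (rfl | h')
      · exact Or.inl rfl
      · exact Or.inr h'
      · exact Or.inr h
      · exact Or.inr ⟨h.1, h.2.1, h'.2.2.1, h'.2.2.2.1, hr.trans _ _ _ h.2.2.2.2 h'.2.2.2.2⟩
    · rintro x y (rfl | h)
      · exact Or.inl rfl
      · right; omega
    · rintro x y z w h1 h2 h3 (rfl | h) (rfl | h')
      · omega
      · omega
      · omega
      · exact Or.inr ⟨h.1, h.2.1, h'.1, h'.2.1, hr.nc _ _ _ _ h1 h2 h3 h.2.2.2.2 h'.2.2.2.2⟩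
  · refine ⟨fun x => Or.inl rfl, ?_, ?_, ?_, ?_⟩
    · rintro x y (rfl | h)
      · exact Or.inl rfl
      · exact Or.inr ⟨h.2.1, h.1, hr.symm _ _ h.2.2⟩
    · rintro x y z (rfl | h) (rfl | h')
      · exact Or.inl rfl
      · exact Or.inr h'
      · exact Or.inr h
      · exact Or.inr ⟨h.1, h'.2.1, hr.trans _ _ _ h.2.2 h'.2.2⟩
    · rintro x y (rfl | h)
      · exact Or.inl rfl
      · have := hr.supp _ _ h.2.2
        omega
    · rintro x y z w h1 h2 h3 (rfl | h) (rfl | h')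
      · omega
      · omega
      · omega
      · exact Or.inr ⟨h.1, h'.1, hr.nc _ _ _ _ h1 h2 h3 h.2.2 h'.2.2⟩
  · have hg : ∀ x, r x (if x = a then M else x) := by
      intro x
      split_ifs with e
      · subst e; exact hM
      · exact hr.refl _
    funext x y
    apply propext
    constructor
    · rintro ((h | h) | (rfl | h))
      · exact hr.trans _ _ _ (hg x) (h ▸ hr.symm _ _ (hg y))
      · exact hr.trans _ _ _ (hg x) (hr.trans _ _ _ h.2.2.2.2 (hr.symm _ _ (hg y)))
      · exact hr.refl _
      · exact h.2.2
    · intro h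
      have h' := hr.symm _ _ h
      rcases hr.supp _ _ h with rfl | hs
      · exact Or.inr (Or.inl rfl)
      have e1 := hsep _ _ h
      have e2 := hsep _ _ h'
      by_cases hx : x ≤ M
      · left
        have hgr := hr.trans _ _ _ (hr.symm _ _ (hg x)) (hr.trans _ _ _ h (hg y))
        show _ ∨ _
        by_cases heq : (if x = a then M else x) = (if y = a then M else y)
        · exact Or.inl heq
        · refine Or.inr ⟨?_, ?_, ?_, ?_, hgr⟩ <;> split_ifs at heq ⊢ <;> omega
      · exact Or.inr (Or.inr ⟨by omega, by omega, h⟩)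

theorem catalan_ne_zero' (n : ℕ) : catalan n ≠ 0 := by
  intro h
  have := succ_mul_catalan_eq_centralBinom n
  have := Nat.centralBinom_pos n
  simp_all

theorem card_NCRel (n : ℕ) : ∀ a, Nat.card {r // NCRel a (a+n) r} = catalan n := by
  induction n using Nat.strong_induction_on with
  | _ n ih =>
  intro a
  cases n with
  | zero =>
    rw [catalan_zero, Nat.card_eq_one_iff_unique]
    refine ⟨⟨?_⟩, ⟨⟨Eq, ?_⟩⟩⟩
    · rintro ⟨r, hr⟩ ⟨s, hs⟩
      apply Subtype.ext
      funext x y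
      apply propext
      constructor
      · intro h
        rcases hr.supp _ _ h with rfl | h
        · exact hs.refl _
        · omega
      · intro h
        rcases hs.supp _ _ h with rfl | h
        · exact hr.refl _
        · omega
    · exact ⟨fun _ => rfl, fun _ _ h => h.symm, fun _ _ _ h h' => h.trans h',
        fun _ _ h => Or.inl h, fun x y z w _ _ _ h h' => by omega⟩
  | succ n =>
    let T : Fin (n+1) → Type := fun m =>
      {q // NCRel (a+1) (a+m+1) q} × {s // NCRel (a+m+1) (a+(n+1)) s}
    have c1 : ∀ m : Fin (n+1), Nat.card {q // NCRel (a+1) (a+m+1) q} = catalan m := by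
      intro m
      have := ih m m.2 (a+1)
      rwa [show a + 1 + (m:ℕ) = a + m + 1 by omega] at this
    have c2 : ∀ m : Fin (n+1), Nat.card {q // NCRel (a+m+1) (a+(n+1)) q} = catalan (n-m) := by
      intro m
      have := ih (n-m) (by omega) (a+m+1)
      rwa [show a + (m:ℕ) + 1 + (n-m) = a + (n + 1) by omega] at this
    have cT : ∀ m, Nat.card (T m) = catalan m * catalan (n-m) := by
      intro m
      rw [Nat.card_prod, c1, c2]
    have fT : ∀ m, Finite (T m) := fun m => Nat.finite_of_card_ne_zero (by
      rw [cT]; exact mul_ne_zero (catalan_ne_zero' _) (catalan_ne_zero' _))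
    let Φ : (Σ m, T m) → {r // NCRel a (a+(n+1)) r} := fun p =>
      ⟨glueRel a (a+p.1) p.2.1.1 p.2.2.1,
        glue_NC (by omega) (by omega) p.2.1.2 p.2.2.2⟩
    have hΦ : Function.Bijective Φ := by
      constructor
      · rintro ⟨m, ⟨q, hq⟩, ⟨s, hs⟩⟩ ⟨m', ⟨q', hq'⟩, ⟨s', hs'⟩⟩ h
        have h : glueRel a (a+m) q s = glueRel a (a+m') q' s' := congrArg Subtype.val h
        have g := glue_max (by omega) hq hs
        have g' := glue_max (by omega) hq' hs'
        have e1 := g'.2 (a+m) (h ▸ g.1)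
        have e2 := g.2 (a+m') (h ▸ g'.1)
        have e : m = m' := by ext; omega
        subst e
        have eq : q = q' := by
          funext x y
          apply propext
          rw [glue_left (by omega) hq hs, glue_left (by omega) hq' hs', h]
        have es : s = s' := by
          funext x y
          apply propext
          rw [glue_right (by omega) hq hs, glue_right (by omega) hq' hs', h]
        subst eq es
        rfl
      · rintro ⟨r, hr⟩
        obtain ⟨M, q, s, h1, h2, hq, hs, h⟩ := exists_glue (by omega) hr
        obtain ⟨m, rfl⟩ := Nat.exists_eq_add_of_le h1
        exact ⟨⟨⟨m, by omega⟩, ⟨q, hq⟩, ⟨s, hs⟩⟩, Subtype.ext h⟩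
    rw [← Nat.card_congr (Equiv.ofBijective Φ hΦ), Nat.card_sigma, catalan_succ]
    exact Finset.sum_congr rfl fun m _ => cT m

/-- The relation on `ℕ` attached to a partition of `Fin n`. -/
def partRel {n : ℕ} (P : Finpartition (Finset.univ : Finset (Fin n))) (x y : ℕ) : Prop :=
  x = y ∨ ∃ B ∈ P.parts, ∃ i ∈ B, ∃ j ∈ B, (i : ℕ) = x ∧ (j : ℕ) = y

theorem partRel_iff {n : ℕ} (P : Finpartition (Finset.univ : Finset (Fin n))) (i j : Fin n) :
    partRel P i j ↔ j ∈ P.part i := by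
  constructor
  · rintro (h | ⟨B, hB, i', hi, j', hj, e1, e2⟩)
    · have : i = j := Fin.ext h
      subst this
      exact P.mem_part (Finset.mem_univ _)
    · have : i' = i := Fin.ext e1
      subst this
      have : j' = j := Fin.ext e2
      subst this
      rwa [P.part_eq_of_mem hB hi]
  · intro h
    exact Or.inr ⟨P.part i, P.part_mem.2 (Finset.mem_univ _), i,
      P.mem_part (Finset.mem_univ _), j, h, rfl, rfl⟩

theorem partRel_NC {n : ℕ} (P : Finpartition (Finset.univ : Finset (Fin n)))
    (hP : IsNoncrossing P) : NCRel 0 (0+n) (partRel P) := by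
  refine ⟨fun x => Or.inl rfl, ?_, ?_, ?_, ?_⟩
  · rintro x y (rfl | ⟨B, hB, i, hi, j, hj, rfl, rfl⟩)
    · exact Or.inl rfl
    · exact Or.inr ⟨B, hB, j, hj, i, hi, rfl, rfl⟩
  · rintro x y z (rfl | ⟨B, hB, i, hi, j, hj, rfl, rfl⟩) h
    · exact h
    · rcases h with rfl | ⟨B', hB', i', hi', j', hj', e, rfl⟩
      · exact Or.inr ⟨B, hB, i, hi, j, hj, rfl, rfl⟩
      · have : i' = j := Fin.ext e
        subst this
        have : B = B' := P.eq_of_mem_parts hB hB' hj hi'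
        subst this
        exact Or.inr ⟨B, hB, i, hi, j', hj', rfl, rfl⟩
  · rintro x y (rfl | ⟨B, hB, i, hi, j, hj, rfl, rfl⟩)
    · exact Or.inl rfl
    · right; omega
  · rintro x y z w h1 h2 h3 (rfl | ⟨B, hB, i, hi, j, hj, rfl, rfl⟩) (rfl | ⟨B', hB', i', hi', j', hj', rfl, rfl⟩)
    · omega
    · omega
    · omega
    · by_cases e : B = B'
      · subst e
        exact Or.inr ⟨B, hB, i, hi, i', hi', rfl, rfl⟩
      · exact absurd ⟨i, i', j, j', h1, h2, h3, B, hB, B', hB', e, hi, hj, hi', hj'⟩ hP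

theorem partRel_inj {n : ℕ} (P Q : Finpartition (Finset.univ : Finset (Fin n)))
    (h : partRel P = partRel Q) : P = Q := by
  have hpart : ∀ i, P.part i = Q.part i := by
    intro i
    ext j
    rw [← partRel_iff, ← partRel_iff, h]
  have key : ∀ P Q : Finpartition (Finset.univ : Finset (Fin n)),
      (∀ i, P.part i = Q.part i) → P.parts ⊆ Q.parts := by
    intro P Q h B hB
    obtain ⟨i, hi⟩ := P.nonempty_of_mem_parts hB
    rw [← P.part_eq_of_mem hB hi, h]
    exact Q.part_mem.2 (Finset.mem_univ _)
  exact Finpartition.ext (Finset.Subset.antisymm (key _ _ hpart) (key _ _ fun i => (hpart i).symm))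

/-- The number of noncrossing set partitions of an `n`-element set equals the `n`-th
Catalan number. -/
theorem card_noncrossing_partitions (n : ℕ) :
    Nat.card {P : Finpartition (Finset.univ : Finset (Fin n)) // IsNoncrossing P} =
    catalan n := by
  classical
  rw [← card_NCRel n 0]
  refine Nat.card_congr (Equiv.ofBijective (fun P => ⟨partRel P.1, partRel_NC P.1 P.2⟩) ⟨?_, ?_⟩)
  · intro P Q h
    exact Subtype.ext (partRel_inj _ _ (congrArg Subtype.val h))
  · rintro ⟨r, hr⟩
    let S : Setoid (Fin n) := ⟨fun i j => r i j, fun i => hr.refl _,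
      fun h => hr.symm _ _ h, fun h h' => hr.trans _ _ _ h h'⟩
    have hS : ∀ i j : Fin n, partRel (Finpartition.ofSetoid S) i j ↔ r i j := by
      intro i j
      rw [partRel_iff, Finpartition.mem_part_ofSetoid_iff_rel]
      rfl
    refine ⟨⟨Finpartition.ofSetoid S, ?_⟩, ?_⟩
    · rintro ⟨a, b, c, d, h1, h2, h3, B, hB, B', hB', hne, ha, hc, hb, hd⟩
      have hac : r a c := (hS a c).1 (Or.inr ⟨B, hB, a, ha, c, hc, rfl, rfl⟩)
      have hbd : r b d := (hS b d).1 (Or.inr ⟨B', hB', b, hb, d, hd, rfl, rfl⟩)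
      have hab := (hS a b).2 (hr.nc _ _ _ _ h1 h2 h3 hac hbd)
      rw [partRel_iff, Finpartition.part_eq_of_mem _ hB ha] at hab
      exact hne (Finpartition.eq_of_mem_parts _ hB hB' hab hb)
    · apply Subtype.ext
      funext x y
      apply propext
      constructor
      · rintro (rfl | ⟨B, hB, i, hi, j, hj, rfl, rfl⟩)
        · exact hr.refl _
        · exact (hS i j).1 (Or.inr ⟨B, hB, i, hi, j, hj, rfl, rfl⟩)
      · intro h
        rcases hr.supp _ _ h with e | e
        · exact Or.inl e
        · exact (hS ⟨x, by omega⟩ ⟨y, by omega⟩).2 h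
end

section
/- There is a bijection between set partitions of {1, ..., 2k} and pairs (P, Q) of vacillating tableaux of the same shape λ and length 2k, where λ ranges over all partitions of size at most k. -/
/-- Vacillating tableaux of length `2k` as a type. -/
def VacTab (k : ℕ) : Type := {f : ℕ → YoungDiagram // VacSeq k f}

/-- Pairs of vacillating tableaux of length `2k` with the same final shape. -/
def VacPairs (k : ℕ) : Type :=
  {pq : VacTab k × VacTab k // pq.1.1 (2*k) = pq.2.1 (2*k)}

namespace VacAux
open Finset

/-- number of ways to distribute `n` further elements when `j` blocks are present -/
def F : ℕ → ℕ → ℕ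
  | 0, _ => 1
  | n+1, j => F n (j+1) + j * F n j

section parts
variable {α : Type} [DecidableEq α]

def glue {s : Finset α} {a : α} (ha : a ∉ s) (P : Finpartition s) (u : Finset α)
    (hu : u ∈ insert ∅ P.parts) : Finpartition (insert a s) :=
  Finpartition.ofExistsUnique (insert (insert a u) (P.parts.erase u))
    (by
      have := fun p (hp : p ∈ P.parts) => P.le hp
      intro p hp
      simp only [mem_insert, mem_erase] at *
      rcases hp with rfl | ⟨_, hp⟩
      · rcases hu with rfl | hu
        · simp
        · exact insert_subset_insert _ (this _ hu)
      · exact (this _ hp).trans (subset_insert _ _))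
    (by
      have hs := fun p (hp : p ∈ P.parts) => P.le hp
      intro x hx
      by_cases hxa : x = a
      · subst hxa
        refine ⟨insert x u, by simp, ?_⟩
        simp only [mem_insert, mem_erase] at *
        rintro p ⟨rfl | ⟨_, hp⟩, hxp⟩
        · rfl
        · exact absurd (hs _ hp hxp) ha
      · have hxs : x ∈ s := by simpa [hxa] using hx
        obtain ⟨t, ⟨ht, hxt⟩, huniq⟩ := P.existsUnique_mem hxs
        simp only [mem_insert, mem_erase] at *
        by_cases htu : t = u
        · subst htu
          refine ⟨insert a t, by simp [hxt], ?_⟩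
          rintro p ⟨rfl | ⟨h1, hp⟩, hxp⟩
          · rfl
          · exact absurd (huniq p ⟨hp, hxp⟩) h1
        · refine ⟨t, by simp [htu, ht, hxt], ?_⟩
          rintro p ⟨rfl | ⟨h1, hp⟩, hxp⟩
          · simp only [mem_insert, hxa, false_or] at hxp
            rcases hu with rfl | hu
            · simp at hxp
            · exact absurd (huniq u ⟨hu, hxp⟩).symm htu
          · exact huniq p ⟨hp, hxp⟩)
    (by
      have := P.bot_notMem
      simp only [mem_insert, mem_erase, not_or, Finset.bot_eq_empty] at *
      exact ⟨(insert_ne_empty _ _).symm, fun h => this h.2⟩)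

def cut {s : Finset α} {a : α} (ha : a ∉ s) (Q : Finpartition (insert a s)) : Finpartition s :=
  Finpartition.ofExistsUnique ((insert ((Q.part a).erase a) (Q.parts.erase (Q.part a))).erase ∅)
    (by
      have hs := fun p (hp : p ∈ Q.parts) => Q.le hp
      have hpa : Q.part a ∈ Q.parts := by simp
      have haa : a ∈ Q.part a := by simp
      intro p hp
      simp only [mem_insert, mem_erase] at *
      rcases hp with ⟨_, rfl | ⟨h1, hp⟩⟩
      · exact subset_insert_iff.1 (hs _ hpa)
      · intro x hx
        have := hs _ hp hx
        rw [mem_insert] at this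
        rcases this with rfl | h
        · exact absurd (Q.part_eq_of_mem hp hx).symm h1
        · exact h)
    (by
      intro x hx
      have hpa : Q.part a ∈ Q.parts := by simp
      have haa : a ∈ Q.part a := by simp
      obtain ⟨t, ⟨ht, hxt⟩, huniq⟩ := Q.existsUnique_mem (mem_insert_of_mem hx : x ∈ insert a s)
      have hxa : x ≠ a := by rintro rfl; exact ha hx
      by_cases htu : t = Q.part a
      · subst htu
        refine ⟨(Q.part a).erase a, ?_, ?_⟩
        · have : x ∈ (Q.part a).erase a := by simp [hxa, hxt]
          simp only [mem_insert, mem_erase, true_or, and_true]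
          exact ⟨ne_empty_of_mem this, hxa, hxt⟩
        · simp only [mem_insert, mem_erase]
          rintro p ⟨⟨_, rfl | ⟨h1, hp⟩⟩, hxp⟩
          · rfl
          · exact absurd (huniq p ⟨hp, hxp⟩) h1
      · refine ⟨t, ?_, ?_⟩
        · simp only [mem_insert, mem_erase]
          exact ⟨⟨ne_empty_of_mem hxt, Or.inr ⟨htu, ht⟩⟩, hxt⟩
        · simp only [mem_insert, mem_erase]
          rintro p ⟨⟨_, rfl | ⟨h1, hp⟩⟩, hxp⟩
          · exact absurd (huniq _ ⟨hpa, (mem_erase.1 hxp).2⟩).symm htu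
          · exact huniq _ ⟨hp, hxp⟩)
    (by simp)

lemma sum_glue {s : Finset α} {a : α} (ha : a ∉ s) (φ : ℕ → ℕ) :
    ∑ Q : Finpartition (insert a s), φ (#Q.parts) =
      ∑ P : Finpartition s, (φ (#P.parts + 1) + #P.parts * φ (#P.parts)) := by
  have h1 : ∀ P : Finpartition s, φ (#P.parts + 1) + #P.parts * φ (#P.parts) =
      ∑ u ∈ insert ∅ P.parts, φ (#(insert (insert a u) (P.parts.erase u))) := by
    intro P
    have hs := fun p (hp : p ∈ P.parts) => P.le hp
    have hn : ∀ u, insert a u ∉ P.parts := fun u hu => ha (hs _ hu (by simp))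
    have h0 : ∅ ∉ P.parts := P.bot_notMem
    rw [sum_insert h0]
    congr 1
    · rw [card_insert_of_notMem (by simpa using hn ∅), erase_eq_of_notMem h0]
    · rw [sum_congr rfl (g := fun _ => φ (#P.parts)), sum_const, smul_eq_mul]
      intro u hu
      rw [card_insert_of_notMem (by simp [hn]), card_erase_add_one hu]
  simp_rw [h1]
  rw [sum_sigma']
  symm
  refine sum_bij' (fun x hx => glue ha x.1 x.2 (by simpa using hx))
    (fun Q _ => ⟨cut ha Q, (Q.part a).erase a⟩) ?_ ?_ ?_ ?_ ?_
  · simp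
  · intro Q _
    simp only [mem_sigma, mem_univ, true_and]
    simp [cut, Finpartition.ofExistsUnique]
    tauto
  · rintro ⟨P, u⟩ hu
    have hu' : u ∈ insert ∅ P.parts := by simpa using hu
    have hs := fun p (hp : p ∈ P.parts) => P.le hp
    have h0 : ∅ ∉ P.parts := P.bot_notMem
    have hau : a ∉ u := by
      rcases mem_insert.1 hu' with rfl | h
      · simp
      · exact fun h' => ha (hs _ h h')
    have hn : ∀ v, insert a v ∉ P.parts := fun u hu => ha (hs _ hu (by simp))
    have hp : (glue ha P u hu').part a = insert a u :=
      Finpartition.part_eq_of_mem _ (by simp [glue, Finpartition.ofExistsUnique]) (by simp)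
    have e2 : ((glue ha P u hu').part a).erase a = u := by rw [hp, erase_insert hau]
    have e1 : cut ha (glue ha P u hu') = P := by
      ext1
      have : (cut ha (glue ha P u hu')).parts = (insert (((glue ha P u hu').part a).erase a)
        ((glue ha P u hu').parts.erase ((glue ha P u hu').part a))).erase ∅ := rfl
      rw [this, e2, hp]
      have : (glue ha P u hu').parts = insert (insert a u) (P.parts.erase u) := rfl
      rw [this, erase_insert (by simp [hn])]
      rcases mem_insert.1 hu' with rfl | h
      · rw [erase_insert (by simp), erase_eq_of_notMem h0]
      · rw [insert_erase h, erase_eq_of_notMem h0]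
    simp only [e1, e2]
  · intro Q _
    have hpa : Q.part a ∈ Q.parts := by simp
    have haa : a ∈ Q.part a := by simp
    have h0 : ∅ ∉ Q.parts := Q.bot_notMem
    ext1
    change insert (insert a ((Q.part a).erase a)) (((insert ((Q.part a).erase a) (Q.parts.erase (Q.part a))).erase ∅).erase ((Q.part a).erase a)) = Q.parts
    rw [insert_erase haa, erase_right_comm, erase_insert, erase_eq_of_notMem (by simp [h0]), insert_erase hpa]
    intro h
    have h2 := (mem_erase.1 h)
    obtain ⟨x, hx⟩ := Finpartition.nonempty_of_mem_parts _ h2.2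
    exact h2.1 (Q.eq_of_mem_parts h2.2 hpa hx (mem_erase.1 hx).2)
  · intro x hx
    rfl

lemma sum_F (s : Finset α) : ∀ m, ∑ P : Finpartition s, F m (#P.parts) = F (m + #s) 0 := by
  induction s using Finset.induction_on with
  | empty =>
    intro m
    have : (univ : Finset (Finpartition (∅ : Finset α))) = {Finpartition.empty _} := by
      ext P
      simp only [mem_univ, mem_singleton, true_iff]
      exact (Subsingleton.elim (α := Finpartition (⊥ : Finset α)) _ _)
    rw [this]; simp [Finpartition.empty]
  | insert a s ha ih =>
    intro m
    rw [sum_glue ha (F m), card_insert_of_notMem ha, ← add_assoc, add_right_comm]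
    exact ih (m+1)

lemma card_finpartition (s : Finset α) : Fintype.card (Finpartition s) = F (#s) 0 := by
  have := sum_F s 0
  simpa [F] using this
end parts
end VacAux

namespace VacAux
open Finset

def Add (l : YoungDiagram) : Set ℕ := {i | i = 0 ∨ l.rowLen i < l.rowLen (i-1)}
def Rem (l : YoungDiagram) : Set ℕ := {i | l.rowLen (i+1) < l.rowLen i}
def upS (l : YoungDiagram) : Set YoungDiagram := {m | l ≤ m ∧ m.card = l.card + 1}
def downS (l : YoungDiagram) : Set YoungDiagram := {m | m ≤ l ∧ l.card = m.card + 1}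

def addC (l : YoungDiagram) (i : ℕ) (hi : i ∈ Add l) : YoungDiagram where
  cells := insert (i, l.rowLen i) l.cells
  isLowerSet := by
    rintro ⟨a, b⟩ ⟨c, d⟩ ⟨h1, h2⟩ h
    simp only [coe_insert, Set.mem_insert_iff, mem_coe, YoungDiagram.mem_cells, Prod.mk.injEq,
      YoungDiagram.mem_iff_lt_rowLen] at *
    rcases h with ⟨rfl, rfl⟩ | h
    · by_cases hc : c = a
      · subst hc; omega
      · rcases hi with hi | hi
        · omega
        · have := l.rowLen_anti c (a-1) (by omega)
          omega
    · right
      have := l.rowLen_anti c a h1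
      omega

def remC (l : YoungDiagram) (i : ℕ) (hi : i ∈ Rem l) : YoungDiagram where
  cells := l.cells.erase (i, l.rowLen i - 1)
  isLowerSet := by
    rintro ⟨a, b⟩ ⟨c, d⟩ ⟨h1, h2⟩ h
    simp only [coe_erase, Set.mem_sdiff, Set.mem_singleton_iff, mem_coe, YoungDiagram.mem_cells, Prod.mk.injEq,
      YoungDiagram.mem_iff_lt_rowLen] at *
    change l.rowLen (i+1) < l.rowLen i at hi
    have := l.rowLen_anti c a h1
    refine ⟨by omega, ?_⟩
    rintro ⟨rfl, rfl⟩
    by_cases hc : c = a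
    · subst hc; omega
    · have := l.rowLen_anti (c+1) a (by omega)
      omega

lemma addC_mem (l : YoungDiagram) (i : ℕ) (hi : i ∈ Add l) : addC l i hi ∈ upS l := by
  constructor
  · rw [← YoungDiagram.cells_subset_iff]; exact subset_insert _ _
  · change #(insert _ _) = _
    rw [card_insert_of_notMem]
    simp [YoungDiagram.mem_iff_lt_rowLen]

lemma remC_mem (l : YoungDiagram) (i : ℕ) (hi : i ∈ Rem l) : remC l i hi ∈ downS l := by
  constructor
  · rw [← YoungDiagram.cells_subset_iff]; exact erase_subset _ _
  · change _ = #(erase _ _) + 1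
    rw [card_erase_add_one]
    change l.rowLen (i+1) < l.rowLen i at hi
    simp [YoungDiagram.mem_iff_lt_rowLen]; omega

lemma exists_insert {l m : YoungDiagram} (h : l ≤ m) (hc : m.card = l.card + 1) :
    ∃ c, c ∉ l.cells ∧ m.cells = insert c l.cells := by
  have h' := YoungDiagram.cells_subset_iff.2 h
  have : #(m.cells \ l.cells) = 1 := by
    rw [card_sdiff_of_subset h']; change m.card - l.card = 1; omega
  obtain ⟨c, hcc⟩ := card_eq_one.1 this
  have hm : c ∈ m.cells \ l.cells := by rw [hcc]; simp
  refine ⟨c, (mem_sdiff.1 hm).2, ?_⟩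
  rw [← sdiff_union_of_subset h', hcc]; rfl

lemma addC_bij (l : YoungDiagram) :
    Function.Bijective (fun i : Add l => (⟨addC l i.1 i.2, addC_mem l i.1 i.2⟩ : upS l)) := by
  constructor
  · rintro ⟨i, hi⟩ ⟨j, hj⟩ h
    have h1 : (addC l i hi).cells = (addC l j hj).cells := by
      have := congrArg Subtype.val h
      exact congrArg YoungDiagram.cells this
    have h2 : (i, l.rowLen i) ∈ (addC l j hj).cells := by rw [← h1]; simp [addC]
    simp [addC, YoungDiagram.mem_iff_lt_rowLen] at h2
    simp [h2]
  · rintro ⟨m, h, hc⟩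
    obtain ⟨⟨i, j⟩, hn, he⟩ := exists_insert h hc
    have key : ∀ a b, b < m.rowLen a ↔ (a = i ∧ b = j) ∨ b < l.rowLen a := by
      intro a b
      rw [← YoungDiagram.mem_iff_lt_rowLen, ← YoungDiagram.mem_cells, he]
      simp [YoungDiagram.mem_iff_lt_rowLen]
    have hn' : ¬ j < l.rowLen i := by simpa [YoungDiagram.mem_iff_lt_rowLen] using hn
    have hj : j = l.rowLen i := by
      by_contra hne
      have h1 := (key i j).2 (by simp)
      have h2 := (key i (j-1)).1 (by omega)
      omega
    have hA : i ∈ Add l := by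
      by_cases h0 : i = 0
      · exact Or.inl h0
      · right
        have h1 := (key i j).2 (by simp)
        have h2 := m.rowLen_anti (i-1) i (by omega)
        have h3 := (key (i-1) j).1 (by omega)
        omega
    refine ⟨⟨i, hA⟩, ?_⟩
    apply Subtype.ext
    apply YoungDiagram.ext
    rw [he, hj]; rfl

lemma remC_bij (l : YoungDiagram) :
    Function.Bijective (fun i : Rem l => (⟨remC l i.1 i.2, remC_mem l i.1 i.2⟩ : downS l)) := by
  constructor
  · rintro ⟨i, hi⟩ ⟨j, hj⟩ h
    have h1 : (remC l i hi).cells = (remC l j hj).cells := by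
      have := congrArg Subtype.val h
      exact congrArg YoungDiagram.cells this
    have h2 : (i, l.rowLen i - 1) ∉ (remC l j hj).cells := by rw [← h1]; simp [remC]
    change l.rowLen (i+1) < l.rowLen i at hi
    simp [remC, YoungDiagram.mem_iff_lt_rowLen] at h2
    by_contra hne
    have hne : ¬ i = j := fun h => hne (Subtype.ext h)
    have := h2 (fun h => absurd h hne)
    omega
  · rintro ⟨m, h, hc⟩
    obtain ⟨⟨i, j⟩, hn, he⟩ := exists_insert h hc
    have key : ∀ a b, b < l.rowLen a ↔ (a = i ∧ b = j) ∨ b < m.rowLen a := by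
      intro a b
      rw [← YoungDiagram.mem_iff_lt_rowLen, ← YoungDiagram.mem_cells, he]
      simp [YoungDiagram.mem_iff_lt_rowLen]
    have hn' : ¬ j < m.rowLen i := by simpa [YoungDiagram.mem_iff_lt_rowLen] using hn
    have h1 := (key i j).2 (by simp)
    have hj : j = l.rowLen i - 1 := by
      by_contra hne
      have h2 := (key i (l.rowLen i - 1)).1 (by omega)
      omega
    have hA : i ∈ Rem l := by
      change l.rowLen (i+1) < l.rowLen i
      by_contra hne
      have h2 := m.rowLen_anti i (i+1) (by omega)
      have h3 := (key (i+1) j).1 (by omega)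
      omega
    refine ⟨⟨i, hA⟩, ?_⟩
    apply Subtype.ext
    apply YoungDiagram.ext
    change l.cells.erase _ = m.cells
    rw [he, ← hj, erase_insert hn]

lemma Rem_finite (l : YoungDiagram) : (Rem l).Finite := by
  apply (Set.finite_Iio (l.colLen 0)).subset
  intro i hi
  change l.rowLen (i+1) < l.rowLen i at hi
  rw [Set.mem_Iio, ← YoungDiagram.mem_iff_lt_colLen, YoungDiagram.mem_iff_lt_rowLen]
  omega

lemma Add_eq (l : YoungDiagram) : Add l = insert 0 (Nat.succ '' Rem l) := by
  ext i
  cases i <;> simp [Add, Rem]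

lemma Add_finite (l : YoungDiagram) : (Add l).Finite := by
  rw [Add_eq]; exact ((Rem_finite l).image _).insert _

lemma Add_card (l : YoungDiagram) : (Add l).ncard = (Rem l).ncard + 1 := by
  rw [Add_eq, Set.ncard_insert_of_notMem (by simp) ((Rem_finite l).image _),
    Set.ncard_image_of_injective _ Nat.succ_injective]

lemma upS_finite (l : YoungDiagram) : (upS l).Finite := by
  have := (Add_finite l).to_subtype
  exact Finite.of_surjective _ (addC_bij l).2

lemma downS_finite (l : YoungDiagram) : (downS l).Finite := by
  have := (Rem_finite l).to_subtype
  exact Finite.of_surjective _ (remC_bij l).2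

noncomputable def up (l : YoungDiagram) : Finset YoungDiagram := (upS_finite l).toFinset
noncomputable def down (l : YoungDiagram) : Finset YoungDiagram := (downS_finite l).toFinset

lemma mem_up {l m : YoungDiagram} : m ∈ up l ↔ l ≤ m ∧ m.card = l.card + 1 := by
  simp [up, upS]
lemma mem_down {l m : YoungDiagram} : m ∈ down l ↔ m ≤ l ∧ l.card = m.card + 1 := by
  simp [down, downS]

lemma card_up (l : YoungDiagram) : #(up l) = #(down l) + 1 := by
  rw [up, down, ← Set.ncard_eq_toFinset_card _ (upS_finite l), ← Set.ncard_eq_toFinset_card _ (downS_finite l)]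
  have h1 : (Add l).ncard = (upS l).ncard := Nat.card_congr (Equiv.ofBijective _ (addC_bij l))
  have h2 : (Rem l).ncard = (downS l).ncard := Nat.card_congr (Equiv.ofBijective _ (remC_bij l))
  rw [← h1, ← h2, Add_card]

lemma card_sup_inf (l m : YoungDiagram) : (l ⊔ m).card + (l ⊓ m).card = l.card + m.card :=
  card_union_add_card_inter l.cells m.cells

lemma eq_of_le_card {l m : YoungDiagram} (h : l ≤ m) (hc : m.card ≤ l.card) : l = m :=
  YoungDiagram.ext (eq_of_subset_of_card_le (YoungDiagram.cells_subset_iff.2 h) hc)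

lemma card_mono {l m : YoungDiagram} (h : l ≤ m) : l.card ≤ m.card :=
  card_le_card (YoungDiagram.cells_subset_iff.2 h)

open Classical in
lemma comm_aux (φ : YoungDiagram → ℕ) (l : YoungDiagram) :
    ∑ m ∈ up l, ∑ n ∈ down m, φ n = ∑ m ∈ down l, ∑ n ∈ up m, φ n + φ l := by
  have e1 : ∑ m ∈ up l, ∑ n ∈ down m, φ n = ∑ m ∈ up l, ∑ n ∈ (down m).erase l, φ n + #(up l) * φ l := by
    rw [← smul_eq_mul, ← sum_const, ← sum_add_distrib]
    refine sum_congr rfl fun m hm => ?_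
    rw [sum_erase_add]
    exact mem_down.2 (mem_up.1 hm)
  have e2 : ∑ m ∈ down l, ∑ n ∈ up m, φ n = ∑ m ∈ down l, ∑ n ∈ (up m).erase l, φ n + #(down l) * φ l := by
    rw [← smul_eq_mul, ← sum_const, ← sum_add_distrib]
    refine sum_congr rfl fun m hm => ?_
    rw [sum_erase_add]
    exact mem_up.2 (mem_down.1 hm)
  rw [e1, e2, card_up, add_mul, one_mul, ← add_assoc]
  congr 2
  rw [sum_sigma', sum_sigma']
  have key1 : ∀ m n : YoungDiagram, m ∈ up l → n ∈ down m → n ≠ l → m = l ⊔ n ∧ l.card = (l ⊓ n).card + 1 := by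
    intro m n h1 h2 h3
    rw [mem_up] at h1
    rw [mem_down] at h2
    have h4 : l ⊔ n ≤ m := sup_le h1.1 h2.1
    have h5 := card_sup_inf l n
    have h6 : l.card < (l ⊔ n).card := by
      by_contra hlt
      have := eq_of_le_card (le_sup_left : l ≤ l ⊔ n) (by omega)
      have hnl : n ≤ l := by rw [this]; exact le_sup_right
      exact h3 (eq_of_le_card hnl (by omega))
    have h7 := card_mono h4
    exact ⟨(eq_of_le_card h4 (by omega)).symm, by omega⟩
  have key2 : ∀ m n : YoungDiagram, m ∈ down l → n ∈ up m → n ≠ l → m = l ⊓ n ∧ (l ⊔ n).card = l.card + 1 := by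
    intro m n h1 h2 h3
    rw [mem_down] at h1
    rw [mem_up] at h2
    have h4 : m ≤ l ⊓ n := le_inf h1.1 h2.1
    have h5 := card_sup_inf l n
    have h6 : (l ⊓ n).card < l.card := by
      by_contra hlt
      have := eq_of_le_card (inf_le_left : l ⊓ n ≤ l) (by omega)
      have hnl : l ≤ n := by rw [← this]; exact inf_le_right
      exact h3 (eq_of_le_card hnl (by omega)).symm
    have h7 := card_mono h4
    exact ⟨(eq_of_le_card h4 (by omega)), by omega⟩
  refine sum_bij' (fun x _ => ⟨l ⊓ x.2, x.2⟩) (fun x _ => ⟨l ⊔ x.2, x.2⟩) ?_ ?_ ?_ ?_ ?_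
  · rintro ⟨m, n⟩ h
    simp only [mem_sigma, mem_erase] at h ⊢
    have := key1 m n h.1 h.2.2 h.2.1
    have h1 := mem_up.1 h.1
    have h2 := mem_down.1 h.2.2
    exact ⟨mem_down.2 ⟨inf_le_left, this.2⟩, h.2.1, mem_up.2 ⟨inf_le_right, by omega⟩⟩
  · rintro ⟨m, n⟩ h
    simp only [mem_sigma, mem_erase] at h ⊢
    have := key2 m n h.1 h.2.2 h.2.1
    have h1 := mem_down.1 h.1
    have h2 := mem_up.1 h.2.2
    exact ⟨mem_up.2 ⟨le_sup_left, this.2⟩, h.2.1, mem_down.2 ⟨le_sup_right, by omega⟩⟩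
  · rintro ⟨m, n⟩ h
    simp only [mem_sigma, mem_erase] at h
    rw [(key1 m n h.1 h.2.2 h.2.1).1]
  · rintro ⟨m, n⟩ h
    simp only [mem_sigma, mem_erase] at h
    rw [(key2 m n h.1 h.2.2 h.2.1).1]
  · intros; rfl
end VacAux

namespace VacAux
open Finset

noncomputable def X : Module.End ℕ (YoungDiagram → ℕ) where
  toFun φ l := φ l + ∑ m ∈ down l, φ m
  map_add' φ ψ := by funext l; simp [sum_add_distrib]; ring
  map_smul' c φ := by funext l; simp [mul_sum, mul_add]

noncomputable def Y : Module.End ℕ (YoungDiagram → ℕ) where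
  toFun φ l := φ l + ∑ m ∈ up l, φ m
  map_add' φ ψ := by funext l; simp [sum_add_distrib]; ring
  map_smul' c φ := by funext l; simp [mul_sum, mul_add]

lemma X_apply (φ : YoungDiagram → ℕ) (l) : X φ l = φ l + ∑ m ∈ down l, φ m := rfl
lemma Y_apply (φ : YoungDiagram → ℕ) (l) : Y φ l = φ l + ∑ m ∈ up l, φ m := rfl

lemma YX : Y * X = X * Y + 1 := by
  refine LinearMap.ext fun φ => ?_
  funext l
  simp only [Module.End.mul_apply, LinearMap.add_apply, Module.End.one_apply, Pi.add_apply,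
    X_apply, Y_apply, sum_add_distrib]
  rw [comm_aux]
  ring

lemma YXpow (j : ℕ) : Y * X ^ (j+1) = X ^ (j+1) * Y + (j+1) • X ^ j := by
  induction j with
  | zero => simp [YX]
  | succ j ih =>
    rw [pow_succ, ← mul_assoc, ih, add_mul, mul_assoc, YX, mul_add, ← mul_assoc, smul_mul_assoc,
      ← pow_succ, mul_one, ← pow_succ, add_assoc, succ_nsmul' _ (j+1)]

open Classical in
noncomputable def dl (l : YoungDiagram) : YoungDiagram → ℕ := fun m => if m = l then 1 else 0

noncomputable def T : Module.End ℕ (YoungDiagram → ℕ) := X * Y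

lemma Ydl : Y (dl ⊥) = dl ⊥ := by
  funext l
  rw [Y_apply, sum_eq_zero, add_zero]
  intro m hm
  rw [mem_up] at hm
  have : m ≠ ⊥ := by
    rintro rfl
    have : (⊥ : YoungDiagram).card = 0 := by simp [YoungDiagram.card]
    omega
  simp [dl, this]

lemma X_bot (φ : YoungDiagram → ℕ) : X φ ⊥ = φ ⊥ := by
  rw [X_apply, sum_eq_zero, add_zero]
  intro m hm
  rw [mem_down] at hm
  have : (⊥ : YoungDiagram).card = 0 := by simp [YoungDiagram.card]
  omega

lemma Xpow_bot (φ : YoungDiagram → ℕ) (j : ℕ) : (X ^ j) φ ⊥ = φ ⊥ := by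
  induction j with
  | zero => simp
  | succ j ih => rw [pow_succ', Module.End.mul_apply, X_bot, ih]

lemma TX (j : ℕ) : T ((X ^ j) (dl ⊥)) = (X ^ (j+1)) (dl ⊥) + j • (X ^ j) (dl ⊥) := by
  rw [T]
  cases j with
  | zero => simp [Module.End.mul_apply, Ydl]
  | succ j =>
    rw [← Module.End.mul_apply, mul_assoc, YXpow, mul_add, ← mul_assoc, ← pow_succ',
      mul_smul_comm, ← pow_succ', LinearMap.add_apply, Module.End.mul_apply, Ydl, LinearMap.smul_apply]

lemma G_eq (n : ℕ) : ∀ j, (T ^ n) ((X ^ j) (dl ⊥)) ⊥ = F n j := by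
  induction n with
  | zero => intro j; simp [F, Xpow_bot, dl]
  | succ n ih =>
    intro j
    rw [pow_succ, Module.End.mul_apply, TX, map_add, map_nsmul, Pi.add_apply, Pi.smul_apply, ih, ih, F,
      smul_eq_mul]

open Classical in
noncomputable def Dn (l : YoungDiagram) : Finset YoungDiagram := insert l (down l)
open Classical in
noncomputable def Up (l : YoungDiagram) : Finset YoungDiagram := insert l (up l)

open Classical in
lemma mem_Dn {l m : YoungDiagram} : m ∈ Dn l ↔ m ≤ l ∧ l.card ≤ m.card + 1 := by
  rw [Dn, mem_insert, mem_down]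
  constructor
  · rintro (rfl | h)
    · exact ⟨le_rfl, by omega⟩
    · exact ⟨h.1, h.2.le⟩
  · rintro ⟨h1, h2⟩
    by_cases h : l.card ≤ m.card
    · exact Or.inl (eq_of_le_card h1 h)
    · exact Or.inr ⟨h1, by omega⟩

open Classical in
lemma mem_Up {l m : YoungDiagram} : m ∈ Up l ↔ l ≤ m ∧ m.card ≤ l.card + 1 := by
  rw [Up, mem_insert, mem_up]
  constructor
  · rintro (rfl | h)
    · exact ⟨le_rfl, by omega⟩
    · exact ⟨h.1, h.2.le⟩
  · rintro ⟨h1, h2⟩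
    by_cases h : m.card ≤ l.card
    · exact Or.inl (eq_of_le_card h1 h).symm
    · exact Or.inr ⟨h1, by omega⟩

open Classical in
lemma T_apply (φ : YoungDiagram → ℕ) (l) : T φ l = ∑ n ∈ Dn l, ∑ m ∈ Up n, φ m := by
  have hY : ∀ n, Y φ n = ∑ m ∈ Up n, φ m := by
    intro n
    rw [Y_apply, Up, sum_insert]
    intro h
    have := (mem_up.1 h).2
    omega
  rw [T, Module.End.mul_apply, X_apply, Dn, sum_insert]
  · simp_rw [hY]
  intro h
  have := (mem_down.1 h).2
  omega

lemma T_symm (l m) : T (dl l) m = T (dl m) l := by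
  classical
  have h : ∀ l m, T (dl l) m = #((Dn m) ∩ (Dn l)) := by
    intro l m
    rw [T_apply, card_eq_sum_ones, ← filter_mem_eq_inter, sum_filter]
    refine sum_congr rfl fun n _ => ?_
    simp only [dl, sum_ite_eq']
    congr 1
    rw [mem_Up, mem_Dn]
  rw [h, h, inter_comm]

def sh {k : ℕ} (P : VacTab k) : YoungDiagram := P.1 (2*k)

abbrev Ext (k : ℕ) : Type := Σ P : VacTab k, Σ n : {n // n ∈ Dn (sh P)}, {m // m ∈ Up n.1}

def restr {k : ℕ} (P : VacTab (k+1)) : VacTab k :=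
  ⟨fun j => P.1 (min j (2*k)), by
    obtain ⟨f, h0, h1, h2, h3⟩ := P
    refine ⟨by simpa using h0, fun i hi => ?_, fun i hi => ?_, fun j hj => by simp [hj]⟩
    · have := h1 i (by omega)
      simp only
      rwa [min_eq_left (by omega), min_eq_left (by omega)]
    · have := h2 i (by omega)
      simp only
      rwa [min_eq_left (by omega), min_eq_left (by omega)]⟩

lemma restr_sh {k : ℕ} (P : VacTab (k+1)) : sh (restr P) = P.1 (2*k) := by
  simp [sh, restr]

def toExt {k : ℕ} (P : VacTab (k+1)) : Ext k :=
  ⟨restr P, ⟨P.1 (2*k+1), by rw [restr_sh, mem_Dn]; exact P.2.2.1 k (by omega)⟩,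
    ⟨P.1 (2*k+2), by rw [mem_Up]; exact P.2.2.2.1 k (by omega)⟩⟩

def extFun {k : ℕ} (P : VacTab k) (n m : YoungDiagram) : ℕ → YoungDiagram :=
  fun j => if j ≤ 2*k then P.1 j else if j = 2*k+1 then n else m

lemma extFun_vac {k : ℕ} (P : VacTab k) (n m : YoungDiagram) (hn : n ∈ Dn (sh P)) (hm : m ∈ Up n) :
    VacSeq (k+1) (extFun P n m) := by
  obtain ⟨f, h0, h1, h2, h3⟩ := P
  rw [mem_Dn] at hn
  rw [mem_Up] at hm
  refine ⟨by simpa [extFun] using h0, fun i hi => ?_, fun i hi => ?_, fun j hj => ?_⟩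
  · by_cases h : i = k
    · subst h; simpa [extFun, sh] using hn
    · have := h1 i (by omega)
      simp only [extFun]
      rwa [if_pos (by omega), if_pos (by omega)]
  · by_cases h : i = k
    · subst h; simpa [extFun] using hm
    · have := h2 i (by omega)
      simp only [extFun]
      rwa [if_pos (by omega), if_pos (by omega)]
  · simp only [extFun]
    rw [if_neg (by omega), if_neg (by omega), if_neg (by omega), if_neg (by omega)]

def ofExt {k : ℕ} (x : Ext k) : VacTab (k+1) :=
  ⟨extFun x.1 x.2.1.1 x.2.2.1, extFun_vac _ _ _ x.2.1.2 x.2.2.2⟩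

lemma Ext_ext {k : ℕ} {x y : Ext k} (h1 : x.1 = y.1) (h2 : x.2.1.1 = y.2.1.1)
    (h3 : x.2.2.1 = y.2.2.1) : x = y := by
  obtain ⟨P, ⟨n, hn⟩, ⟨m, hm⟩⟩ := x
  obtain ⟨P', ⟨n', hn'⟩, ⟨m', hm'⟩⟩ := y
  simp only at h1 h2 h3
  subst h1; subst h2; subst h3
  rfl

def stepEquiv (k : ℕ) : VacTab (k+1) ≃ Ext k where
  toFun := toExt
  invFun := ofExt
  left_inv P := by
    apply Subtype.ext
    funext j
    obtain ⟨f, h0, h1, h2, h3⟩ := P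
    simp only [ofExt, toExt, extFun, restr]
    split_ifs with h h'
    · rw [min_eq_left h]
    · rw [h']
    · exact (h3 j (by omega)).symm
  right_inv x := by
    apply Ext_ext
    · apply Subtype.ext
      funext j
      have h3 := x.1.2.2.2.2
      simp only [ofExt, toExt, extFun, restr]
      rw [if_pos (by omega)]
      by_cases h : j ≤ 2*k
      · rw [min_eq_left h]
      · rw [min_eq_right (by omega), h3 j (by omega)]
    · simp [ofExt, toExt, extFun]
    · simp [ofExt, toExt, extFun]

lemma vac_zero (P : VacTab 0) (j : ℕ) : P.1 j = ⊥ := by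
  have h3 := P.2.2.2.2 j (by omega)
  rw [h3]; exact P.2.1

instance finVac (k : ℕ) : Finite (VacTab k) := by
  induction k with
  | zero =>
    have : Subsingleton (VacTab 0) :=
      ⟨fun P Q => Subtype.ext (funext fun j => by rw [vac_zero, vac_zero])⟩
    infer_instance
  | succ k ih => exact Finite.of_equiv _ (stepEquiv k).symm

noncomputable instance (k : ℕ) : Fintype (VacTab k) := Fintype.ofFinite _

lemma sum_step (k : ℕ) (φ : YoungDiagram → ℕ) :
    ∑ P : VacTab (k+1), φ (sh P) = ∑ P : VacTab k, T φ (sh P) := by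
  rw [← (stepEquiv k).symm.sum_comp, Fintype.sum_sigma]
  refine sum_congr rfl fun P _ => ?_
  rw [Fintype.sum_sigma, T_apply, ← Finset.sum_coe_sort (Dn (sh P)) (fun n => ∑ m ∈ Up n, φ m)]
  refine sum_congr rfl fun n _ => ?_
  rw [← Finset.sum_coe_sort (Up n.1) φ]
  refine sum_congr rfl fun m _ => ?_
  congr 1
  change extFun P n.1 m.1 (2*(k+1)) = m.1
  simp [extFun, mul_add]

lemma sum_zero (φ : YoungDiagram → ℕ) : ∑ P : VacTab 0, φ (sh P) = φ ⊥ := by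
  have : Unique (VacTab 0) :=
    { default := ⟨fun _ => ⊥, rfl, by simp, by simp, by simp⟩
      uniq := fun P => Subtype.ext (funext fun j => by rw [vac_zero]) }
  rw [Fintype.sum_subsingleton _ default]
  congr 1
  exact vac_zero _ _

lemma sum_all (k : ℕ) : ∀ φ : YoungDiagram → ℕ, ∑ P : VacTab k, φ (sh P) = (T ^ k) φ ⊥ := by
  induction k with
  | zero => intro φ; simpa using sum_zero φ
  | succ k ih => intro φ; rw [sum_step, ih (T φ), pow_succ, Module.End.mul_apply]

lemma w_eq (k : ℕ) : ∑ Q : VacTab k, dl (sh Q) = (T ^ k) (dl ⊥) := by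
  induction k with
  | zero =>
    funext l
    rw [Finset.sum_apply]
    simpa using sum_zero (fun m => dl m l)
  | succ k ih =>
    rw [pow_succ', Module.End.mul_apply, ← ih, map_sum]
    funext l
    rw [Finset.sum_apply, Finset.sum_apply]
    have h : ∀ m, dl m l = dl l m := fun m => by
      by_cases hlm : l = m
      · rw [hlm]
      · simp [dl, hlm, Ne.symm hlm]
    simp_rw [h, sum_step k (dl l), T_symm l]

lemma card_pairs (k : ℕ) : Nat.card (VacPairs k) = F (2*k) 0 := by
  classical
  have h1 : Nat.card (VacPairs k) = ∑ P : VacTab k, ∑ Q : VacTab k, dl (sh Q) (sh P) := by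
    rw [← Fintype.sum_prod_type' (f := fun P Q : VacTab k => dl (sh Q) (sh P))]
    simp only [dl]
    rw [← card_filter, ← Fintype.card_subtype, ← Nat.card_eq_fintype_card]
    rfl
  rw [h1]
  simp_rw [← Finset.sum_apply]
  rw [w_eq, sum_all k, ← Module.End.mul_apply, ← pow_add, ← two_mul]
  simpa using G_eq (2*k) 0

instance (k : ℕ) : Finite (VacPairs k) := by unfold VacPairs; infer_instance
end VacAux

/-- There is a bijection between set partitions of `{1, ..., 2k}` and pairs of
vacillating tableaux of the same shape and length `2k`. -/
theorem setPartition_equiv_vacillating_pairs (k : ℕ) :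
    Nonempty (Finpartition (Finset.univ : Finset (Fin (2*k))) ≃ VacPairs k) := by
  refine Finite.card_eq.1 ?_
  rw [VacAux.card_pairs, Nat.card_eq_fintype_card, VacAux.card_finpartition]
  simp
end

section
/- The number of symmetric set partitions of {1,...,k,1',...,k'} (set partitions fixed by the flip i ↔ i') equals the sum over partitions λ of size at most k of the number of vacillating tableaux of shape λ and length 2k. -/
namespace SymPart

open Finset

abbrev YD := YoungDiagram

noncomputable instance instDecYD : DecidableEq YoungDiagram := Classical.decEq _

/-- rows whose last cell is removable -/
noncomputable def remRows (l : YD) : Finset ℕ :=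
  (Finset.range (l.colLen 0)).filter (fun i => l.rowLen (i+1) < l.rowLen i)

noncomputable def addRows (l : YD) : Finset ℕ :=
  insert 0 ((remRows l).image Nat.succ)

lemma mem_remRows (l : YD) (i : ℕ) : i ∈ remRows l ↔ l.rowLen (i+1) < l.rowLen i := by
  unfold remRows
  simp only [Finset.mem_filter, Finset.mem_range, and_iff_right_iff_imp]
  intro h
  rw [← YoungDiagram.mem_iff_lt_colLen, YoungDiagram.mem_iff_lt_rowLen]
  omega

lemma mem_addRows (l : YD) (i : ℕ) :
    i ∈ addRows l ↔ ∀ i', i = i' + 1 → l.rowLen i < l.rowLen i' := by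
  unfold addRows
  simp only [Finset.mem_insert, Finset.mem_image, mem_remRows]
  constructor
  · rintro (rfl | ⟨a, h, rfl⟩) i' hi
    · omega
    · obtain rfl : a = i' := by omega
      exact h
  · intro h
    rcases i with _ | i
    · left; rfl
    · right; exact ⟨i, h i rfl, rfl⟩

lemma card_addRows (l : YD) : (addRows l).card = (remRows l).card + 1 := by
  unfold addRows
  rw [Finset.card_insert_of_notMem (by simp),
    Finset.card_image_of_injective _ Nat.succ_injective]

noncomputable def addBox (l : YD) (i : ℕ) : YD :=
  if h : i ∈ addRows l then
    { cells := insert (i, l.rowLen i) l.cells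
      isLowerSet := by
        rw [mem_addRows] at h
        rintro ⟨a, b⟩ ⟨c, d⟩ hle hm
        have h1 : c ≤ a := hle.1
        have h2 : d ≤ b := hle.2
        simp only [Finset.coe_insert, Set.mem_insert_iff, Finset.mem_coe,
          YoungDiagram.mem_cells, Prod.mk.injEq, YoungDiagram.mem_iff_lt_rowLen] at hm ⊢
        rcases hm with ⟨rfl, rfl⟩ | hm
        · rcases Nat.lt_or_ge c a with h3 | h3
          · right
            have := h (a-1) (by omega)
            have := l.rowLen_anti c (a-1) (by omega)
            omega
          · obtain rfl : c = a := by omega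
            omega
        · right
          have := l.rowLen_anti c a h1
          omega }
  else l

noncomputable def remBox (l : YD) (i : ℕ) : YD :=
  if h : i ∈ remRows l then
    { cells := l.cells.erase (i, l.rowLen i - 1)
      isLowerSet := by
        rw [mem_remRows] at h
        rintro ⟨a, b⟩ ⟨c, d⟩ hle hm
        have h1 : c ≤ a := hle.1
        have h2 : d ≤ b := hle.2
        simp only [Finset.coe_erase, Set.mem_sdiff, Set.mem_singleton_iff, Finset.mem_coe,
          YoungDiagram.mem_cells, Prod.mk.injEq, YoungDiagram.mem_iff_lt_rowLen] at hm ⊢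
        have h3 := l.rowLen_anti c a h1
        refine ⟨by omega, ?_⟩
        rintro ⟨rfl, rfl⟩
        rcases Nat.lt_or_ge c a with h4 | h4
        · have := l.rowLen_anti (c+1) a (by omega)
          omega
        · obtain rfl : c = a := by omega
          omega }
  else l

noncomputable def up (l : YD) : Finset YD := (addRows l).image (addBox l)
noncomputable def dn (l : YD) : Finset YD := (remRows l).image (remBox l)

lemma cells_addBox {l : YD} {i : ℕ} (h : i ∈ addRows l) :
    (addBox l i).cells = insert (i, l.rowLen i) l.cells := by
  unfold addBox; rw [dif_pos h]

lemma cells_remBox {l : YD} {i : ℕ} (h : i ∈ remRows l) :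
    (remBox l i).cells = l.cells.erase (i, l.rowLen i - 1) := by
  unfold remBox; rw [dif_pos h]

lemma card_up (l : YD) : (up l).card = (addRows l).card := by
  unfold up
  apply Finset.card_image_of_injOn
  intro i hi j hj hij
  have h := congrArg YoungDiagram.cells hij
  rw [cells_addBox hi, cells_addBox hj] at h
  have h1 : (i, l.rowLen i) ∈ insert (j, l.rowLen j) l.cells := by
    rw [← h]; simp
  simp only [Finset.mem_insert, YoungDiagram.mem_cells, Prod.mk.injEq,
    YoungDiagram.mem_iff_lt_rowLen] at h1
  omega

lemma card_dn (l : YD) : (dn l).card = (remRows l).card := by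
  unfold dn
  apply Finset.card_image_of_injOn
  intro i hi j hj hij
  have h := congrArg YoungDiagram.cells hij
  rw [cells_remBox hi, cells_remBox hj] at h
  have h1 : (i, l.rowLen i - 1) ∉ l.cells.erase (j, l.rowLen j - 1) := by
    rw [← h]; simp
  have hi' := (mem_remRows l i).1 hi
  simp only [Finset.mem_erase, YoungDiagram.mem_cells, Prod.mk.injEq, ne_eq,
    YoungDiagram.mem_iff_lt_rowLen] at h1
  by_contra hne
  apply h1
  refine ⟨fun h => hne h.1, by omega⟩

lemma cover_cell {l n : YD} (h : l ≤ n) (hc : n.card = l.card + 1) :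
    ∃ c, c ∉ l.cells ∧ n.cells = insert c l.cells := by
  have h1 : l.cells ⊆ n.cells := h
  have h2 : (n.cells \ l.cells).card = 1 := by
    rw [Finset.card_sdiff_of_subset h1]
    simp only [YoungDiagram.card] at hc
    omega
  obtain ⟨c, hc⟩ := Finset.card_eq_one.1 h2
  have hm : c ∈ n.cells \ l.cells := by rw [hc]; simp
  refine ⟨c, (Finset.mem_sdiff.1 hm).2, ?_⟩
  rw [← Finset.sdiff_union_of_subset h1, hc]; rfl

lemma mem_up {l n : YD} : n ∈ up l ↔ l ≤ n ∧ n.card = l.card + 1 := by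
  unfold up
  rw [Finset.mem_image]
  constructor
  · rintro ⟨i, hi, rfl⟩
    have hc := cells_addBox hi
    constructor
    · rw [← YoungDiagram.cells_subset_iff, hc]; exact Finset.subset_insert _ _
    · unfold YoungDiagram.card
      rw [hc, Finset.card_insert_of_notMem]
      simp [YoungDiagram.mem_iff_lt_rowLen]
  · rintro ⟨h1, h2⟩
    obtain ⟨⟨i, j⟩, hc, hn⟩ := cover_cell h1 h2
    have hmem : ∀ a b, (a, b) ∈ n ↔ (a, b) = (i, j) ∨ (a, b) ∈ l := by
      intro a b
      rw [← YoungDiagram.mem_cells, hn, Finset.mem_insert, YoungDiagram.mem_cells]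
    have hij : (i, j) ∈ n := (hmem i j).2 (Or.inl rfl)
    rw [YoungDiagram.mem_cells, YoungDiagram.mem_iff_lt_rowLen] at hc
    have hj : j = l.rowLen i := by
      by_contra hne
      have h3 : (i, l.rowLen i) ∈ n := n.up_left_mem le_rfl (by omega) hij
      rw [hmem, YoungDiagram.mem_iff_lt_rowLen] at h3
      simp only [Prod.mk.injEq] at h3
      omega
    have hi : i ∈ addRows l := by
      rw [mem_addRows]
      rintro i' rfl
      have h3 : (i', j) ∈ n := n.up_left_mem (by omega) le_rfl hij
      rw [hmem, YoungDiagram.mem_iff_lt_rowLen] at h3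
      simp only [Prod.mk.injEq] at h3
      omega
    refine ⟨i, hi, ?_⟩
    apply YoungDiagram.ext
    rw [cells_addBox hi, hn, hj]

lemma mem_dn {n l : YD} : l ∈ dn n ↔ l ≤ n ∧ n.card = l.card + 1 := by
  unfold dn
  rw [Finset.mem_image]
  constructor
  · rintro ⟨i, hi, rfl⟩
    have hc := cells_remBox hi
    constructor
    · rw [← YoungDiagram.cells_subset_iff, hc]; exact Finset.erase_subset _ _
    · unfold YoungDiagram.card
      rw [hc, Finset.card_erase_add_one]
      rw [mem_remRows] at hi
      rw [YoungDiagram.mem_cells, YoungDiagram.mem_iff_lt_rowLen]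
      omega
  · rintro ⟨h1, h2⟩
    obtain ⟨⟨i, j⟩, hc, hn⟩ := cover_cell h1 h2
    have hmem : ∀ a b, (a, b) ∈ n ↔ (a, b) = (i, j) ∨ (a, b) ∈ l := by
      intro a b
      rw [← YoungDiagram.mem_cells, hn, Finset.mem_insert, YoungDiagram.mem_cells]
    have hij : (i, j) ∈ n := (hmem i j).2 (Or.inl rfl)
    rw [YoungDiagram.mem_cells] at hc
    have e1 : (i, j+1) ∉ n := by
      intro h3
      rw [hmem] at h3
      rcases h3 with h3 | h3
      · simp at h3
      · exact hc (l.up_left_mem le_rfl (by omega) h3)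
    have e2 : (i+1, j) ∉ n := by
      intro h3
      rw [hmem] at h3
      rcases h3 with h3 | h3
      · simp at h3
      · exact hc (l.up_left_mem (by omega) le_rfl h3)
    rw [YoungDiagram.mem_iff_lt_rowLen] at e1 e2 hij
    have hi : i ∈ remRows n := by
      rw [mem_remRows]; omega
    refine ⟨i, hi, ?_⟩
    apply YoungDiagram.ext
    rw [cells_remBox hi, show n.rowLen i - 1 = j by omega, hn, Finset.erase_insert]
    rwa [YoungDiagram.mem_cells]

lemma card_up_eq (l : YD) : (up l).card = (dn l).card + 1 := by
  rw [card_up, card_dn, card_addRows]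

/-- dual up operator -/
noncomputable def opU : Module.End ℕ (YD → ℕ) where
  toFun h l := ∑ n ∈ up l, h n
  map_add' f g := by ext l; simp [Finset.sum_add_distrib]
  map_smul' c f := by ext l; simp [Finset.mul_sum]

noncomputable def opD : Module.End ℕ (YD → ℕ) where
  toFun h l := ∑ n ∈ dn l, h n
  map_add' f g := by ext l; simp [Finset.sum_add_distrib]
  map_smul' c f := by ext l; simp [Finset.mul_sum]

lemma opU_apply (h : YD → ℕ) (l : YD) : opU h l = ∑ n ∈ up l, h n := rfl
lemma opD_apply (h : YD → ℕ) (l : YD) : opD h l = ∑ n ∈ dn l, h n := rfl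

lemma card_sup_inf (l m : YD) : (l ⊔ m).card + (l ⊓ m).card = l.card + m.card := by
  unfold YoungDiagram.card
  rw [YoungDiagram.cells_sup, YoungDiagram.cells_inf, Finset.card_union_add_card_inter]

lemma card_mono {l m : YD} (h : l ≤ m) : l.card ≤ m.card :=
  Finset.card_le_card h

lemma eq_of_le_card {l m : YD} (h : l ≤ m) (hc : m.card ≤ l.card) : l = m :=
  YoungDiagram.ext (Finset.eq_of_subset_of_card_le h hc)

lemma comm_offdiag (h : YD → ℕ) (l : YD) :
    ∑ n ∈ up l, ∑ m ∈ (dn n).erase l, h m = ∑ n ∈ dn l, ∑ m ∈ (up n).erase l, h m := by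
  rw [Finset.sum_sigma', Finset.sum_sigma']
  refine Finset.sum_bij' (fun p _ => ⟨l ⊓ p.2, p.2⟩) (fun p _ => ⟨l ⊔ p.2, p.2⟩) ?_ ?_ ?_ ?_ ?_
  · rintro ⟨n, m⟩ hp
    simp only [Finset.mem_sigma, Finset.mem_erase, mem_up, mem_dn] at hp ⊢
    obtain ⟨⟨h1, h2⟩, h3, h4, h5⟩ := hp
    have e := card_sup_inf l m
    have e1 : (l ⊔ m).card ≤ n.card := card_mono (sup_le h1 h4)
    have e2 : l.card < (l ⊔ m).card := by
      by_contra hlt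
      have := eq_of_le_card (le_sup_left : l ≤ l ⊔ m) (by omega)
      have h6 : m ≤ l := by rw [this]; exact le_sup_right
      exact h3 (eq_of_le_card h6 (by omega))
    exact ⟨⟨inf_le_left, by omega⟩, h3, inf_le_right, by omega⟩
  · rintro ⟨n, m⟩ hp
    simp only [Finset.mem_sigma, Finset.mem_erase, mem_up, mem_dn] at hp ⊢
    obtain ⟨⟨h1, h2⟩, h3, h4, h5⟩ := hp
    have e := card_sup_inf l m
    have e1 : n.card ≤ (l ⊓ m).card := card_mono (le_inf h1 h4)
    have e2 : (l ⊓ m).card < l.card := by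
      by_contra hlt
      have := eq_of_le_card (inf_le_left : l ⊓ m ≤ l) (by omega)
      have h6 : l ≤ m := by rw [← this]; exact inf_le_right
      exact h3 (eq_of_le_card h6 (by omega)).symm
    exact ⟨⟨le_sup_left, by omega⟩, h3, le_sup_right, by omega⟩
  · rintro ⟨n, m⟩ hp
    simp only [Finset.mem_sigma, Finset.mem_erase, mem_up, mem_dn] at hp ⊢
    obtain ⟨⟨h1, h2⟩, h3, h4, h5⟩ := hp
    have e2 : l.card < (l ⊔ m).card := by
      by_contra hlt
      have := eq_of_le_card (le_sup_left : l ≤ l ⊔ m) (by omega)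
      have h6 : m ≤ l := by rw [this]; exact le_sup_right
      exact h3 (eq_of_le_card h6 (by omega))
    have e3 : l ⊔ m = n := eq_of_le_card (sup_le h1 h4) (by omega)
    simp [e3]
  · rintro ⟨n, m⟩ hp
    simp only [Finset.mem_sigma, Finset.mem_erase, mem_up, mem_dn] at hp ⊢
    obtain ⟨⟨h1, h2⟩, h3, h4, h5⟩ := hp
    have e2 : (l ⊓ m).card < l.card := by
      by_contra hlt
      have := eq_of_le_card (inf_le_left : l ⊓ m ≤ l) (by omega)
      have h6 : l ≤ m := by rw [← this]; exact inf_le_right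
      exact h3 (eq_of_le_card h6 (by omega)).symm
    have e3 : n = l ⊓ m := eq_of_le_card (le_inf h1 h4) (by omega)
    simp [← e3]
  · intro p hp; rfl

lemma comm_UD : opU * opD = opD * opU + 1 := by
  apply LinearMap.ext
  intro h
  funext l
  simp only [Module.End.mul_apply, LinearMap.add_apply, Pi.add_apply, Module.End.one_apply,
    opU_apply, opD_apply]
  have e1 : ∀ n ∈ up l, ∑ m ∈ dn n, h m = h l + ∑ m ∈ (dn n).erase l, h m := by
    intro n hn
    rw [Finset.add_sum_erase]
    rw [mem_dn]; exact mem_up.1 hn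
  have e2 : ∀ n ∈ dn l, ∑ m ∈ up n, h m = h l + ∑ m ∈ (up n).erase l, h m := by
    intro n hn
    rw [Finset.add_sum_erase]
    rw [mem_up]; exact mem_dn.1 hn
  rw [Finset.sum_congr rfl e1, Finset.sum_congr rfl e2, Finset.sum_add_distrib,
    Finset.sum_add_distrib, comm_offdiag, Finset.sum_const, Finset.sum_const, card_up_eq]
  simp only [smul_eq_mul]
  ring

noncomputable def opA : Module.End ℕ (YD → ℕ) := 1 + opU

lemma comm_AD : opA * opD = opD * opA + 1 := by
  unfold opA
  rw [add_mul, mul_add, comm_UD, one_mul, mul_one, add_assoc]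

lemma comm_powAD (j : ℕ) : opA ^ j * opD = opD * opA ^ j + j • opA ^ (j-1) := by
  induction j with
  | zero => simp
  | succ j ih =>
    rw [pow_succ', mul_assoc, ih, mul_add, ← mul_assoc, comm_AD, add_mul, one_mul, mul_assoc,
      add_assoc, mul_smul_comm, ← pow_succ']
    congr 1
    rcases j with _ | j
    · simp
    · simp only [Nat.add_sub_cancel]
      rw [← pow_succ', succ_nsmul' _ (j+1)]

lemma opD_bot (h : YD → ℕ) : opD h ⊥ = 0 := by
  rw [opD_apply]
  apply Finset.sum_eq_zero
  intro n hn
  have := (mem_dn.1 hn).2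
  simp [YoungDiagram.card] at this

/-- number of continuations -/
noncomputable def cnt : ℕ → (YD → ℕ)
  | 0 => 1
  | k+1 => (1 + opD) (opA (cnt k))

def tt : ℕ → ℕ
  | 0 => 1
  | 1 => 2
  | n+2 => 2 * tt (n+1) + (n+1) * tt n

noncomputable def gg (m j : ℕ) : ℕ := (opA ^ j) (cnt m) ⊥

lemma gg_succ (m j : ℕ) : gg (m+1) j = gg m (j+1) + j * gg m j := by
  unfold gg
  have e : (opA ^ j) (cnt (m+1)) = (opA^(j+1)) (cnt m) + (opD * opA^j) (opA (cnt m)) +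
      (j • opA^(j-1)) (opA (cnt m)) := by
    rw [add_assoc, ← LinearMap.add_apply, ← comm_powAD]
    simp only [cnt, LinearMap.add_apply, map_add, pow_succ, Module.End.mul_apply,
      Module.End.one_apply]
  rw [e]
  simp only [Pi.add_apply, Module.End.mul_apply, opD_bot, add_zero]
  congr 1
  rcases j with _ | j
  · simp
  · simp [pow_succ, Module.End.mul_apply]
    ring

lemma opA_one : opA (1 : YD → ℕ) = 2 • (1 : YD → ℕ) + opD 1 := by
  funext l
  simp only [opA, LinearMap.add_apply, Module.End.one_apply, Pi.add_apply, opU_apply, opD_apply,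
    Pi.smul_apply, Pi.one_apply, Finset.sum_const, card_up_eq, smul_eq_mul]
  ring

lemma gg_zero_succ (j : ℕ) : gg 0 (j+1) = 2 * gg 0 j + j * gg 0 (j-1) := by
  unfold gg
  have e : (opA ^ (j+1)) (cnt 0) = 2 • (opA^j) (cnt 0) + (opD * opA^j) (cnt 0) +
      (j • opA^(j-1)) (cnt 0) := by
    rw [add_assoc, ← LinearMap.add_apply, ← comm_powAD]
    rw [pow_succ, Module.End.mul_apply, Module.End.mul_apply]
    simp only [cnt]
    rw [opA_one, map_add, map_nsmul]
  rw [e]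
  simp only [Pi.add_apply, Module.End.mul_apply, opD_bot, add_zero]
  simp

lemma gg_zero (j : ℕ) : gg 0 j = tt j := by
  induction j using tt.induct with
  | case1 => simp [gg, cnt, tt]
  | case2 => rw [gg_zero_succ]; simp [gg, cnt, tt]
  | case3 n h1 h2 => rw [gg_zero_succ, tt, h1, Nat.add_sub_cancel, h2]

end SymPart

namespace SymPart

def Walk (k : ℕ) (l : YD) (f : ℕ → YD) : Prop :=
  f 0 = l ∧
  (∀ i < k, f (2*i+1) ≤ f (2*i) ∧ (f (2*i)).card ≤ (f (2*i+1)).card + 1) ∧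
  (∀ i < k, f (2*i+1) ≤ f (2*i+2) ∧ (f (2*i+2)).card ≤ (f (2*i+1)).card + 1) ∧
  (∀ j, 2*k ≤ j → f j = f (2*k))

lemma mem_dn' {n l : YD} : l ∈ insert n (dn n) ↔ l ≤ n ∧ n.card ≤ l.card + 1 := by
  rw [Finset.mem_insert, mem_dn]
  constructor
  · rintro (rfl | ⟨h1, h2⟩)
    · exact ⟨le_rfl, by omega⟩
    · exact ⟨h1, by omega⟩
  · rintro ⟨h1, h2⟩
    by_cases h3 : n.card ≤ l.card
    · left; exact eq_of_le_card h1 h3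
    · right; exact ⟨h1, by omega⟩

lemma mem_up' {n l : YD} : n ∈ insert l (up l) ↔ l ≤ n ∧ n.card ≤ l.card + 1 := by
  rw [Finset.mem_insert, mem_up]
  constructor
  · rintro (rfl | ⟨h1, h2⟩)
    · exact ⟨le_rfl, by omega⟩
    · exact ⟨h1, by omega⟩
  · rintro ⟨h1, h2⟩
    by_cases h3 : n.card ≤ l.card
    · left; exact (eq_of_le_card h1 h3).symm
    · right; exact ⟨h1, by omega⟩

lemma sum_dn' (h : YD → ℕ) (l : YD) : ∑ n ∈ insert l (dn l), h n = (1 + opD) h l := by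
  rw [Finset.sum_insert]
  · rfl
  · rw [mem_dn]; omega

lemma sum_up' (h : YD → ℕ) (l : YD) : ∑ n ∈ insert l (up l), h n = opA h l := by
  rw [Finset.sum_insert]
  · rfl
  · rw [mem_up]; omega

def consWalk (l m : YD) (g : ℕ → YD) : ℕ → YD
  | 0 => l
  | 1 => m
  | j+2 => g j

def walkEquiv (k : ℕ) (l : YD) :
    {f // Walk (k+1) l f} ≃
      Σ m : {m // m ∈ insert l (dn l)}, Σ n : {n // n ∈ insert m.1 (up m.1)}, {g // Walk k n.1 g} where
  toFun f := ⟨⟨f.1 1, by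
      obtain ⟨f, h0, h1, h2, h3⟩ := f
      have := h1 0 (by omega)
      subst h0
      exact mem_dn'.2 this⟩, ⟨f.1 2, by
      obtain ⟨f, h0, h1, h2, h3⟩ := f
      have := h2 0 (by omega)
      exact mem_up'.2 this⟩, ⟨fun j => f.1 (j+2), by
      obtain ⟨f, h0, h1, h2, h3⟩ := f
      refine ⟨rfl, fun i hi => h1 (i+1) (by omega), fun i hi => h2 (i+1) (by omega), ?_⟩
      intro j hj
      exact h3 (j+2) (by omega)⟩⟩
  invFun p := ⟨consWalk l p.1.1 p.2.2.1, by
      obtain ⟨⟨m, hm⟩, ⟨n, hn⟩, ⟨g, h0, h1, h2, h3⟩⟩ := p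
      simp only at h0
      refine ⟨rfl, ?_, ?_, ?_⟩
      · rintro (_ | i) hi
        · exact mem_dn'.1 hm
        · exact h1 i (by omega)
      · rintro (_ | i) hi
        · have := mem_up'.1 hn
          simp only [← h0] at this
          exact this
        · exact h2 i (by omega)
      · intro j hj
        obtain ⟨j, rfl⟩ : ∃ j', j = j' + 2 := ⟨j-2, by omega⟩
        exact h3 j (by omega)⟩
  left_inv f := by
    obtain ⟨f, h0, h1, h2, h3⟩ := f
    apply Subtype.ext
    funext j
    rcases j with _ | _ | j
    · exact h0.symm
    · rfl
    · rfl
  right_inv p := by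
    obtain ⟨⟨m, hm⟩, ⟨n, hn⟩, ⟨g, h0, h1, h2, h3⟩⟩ := p
    simp only at h0
    subst h0
    rfl

lemma walk_count (k : ℕ) : ∀ l : YD,
    Finite {f // Walk k l f} ∧ Nat.card {f // Walk k l f} = cnt k l := by
  induction k with
  | zero =>
    intro l
    have : Unique {f // Walk 0 l f} :=
      { default := ⟨fun _ => l, rfl, by intros; omega, by intros; omega, fun _ _ => rfl⟩
        uniq := by
          rintro ⟨f, h0, h1, h2, h3⟩
          apply Subtype.ext
          funext j
          exact (h3 j (by omega)).trans h0 }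
    exact ⟨inferInstance, by simp [cnt]⟩
  | succ k ih =>
    intro l
    have hfin : ∀ n, Finite {f // Walk k n f} := fun n => (ih n).1
    refine ⟨Finite.of_equiv _ (walkEquiv k l).symm, ?_⟩
    rw [Nat.card_congr (walkEquiv k l), Nat.card_sigma]
    simp only [Nat.card_sigma, (ih _).2]
    rw [cnt, ← sum_dn', ← Finset.sum_coe_sort (insert l (dn l))]
    apply Finset.sum_congr rfl
    rintro ⟨m, hm⟩ _
    rw [← sum_up', ← Finset.sum_coe_sort (insert m (up m))]

end SymPart

namespace SymPart

lemma vac_card_le {k : ℕ} {f : ℕ → YD} (h : VacSeq k f) : ∀ i ≤ k, (f (2*i)).card ≤ i := by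
  obtain ⟨h0, h1, h2, h3⟩ := h
  intro i
  induction i with
  | zero => intro _; simp [h0, YoungDiagram.card]
  | succ i ih =>
    intro hi
    have a := ih (by omega)
    have b := card_mono (h1 i (by omega)).1
    have c := (h2 i (by omega)).2
    have : 2 * (i+1) = 2*i+2 := by ring
    rw [this]
    omega

lemma sum_mVT (k : ℕ) :
    ∑ᶠ lam ∈ {lam : YoungDiagram | lam.card ≤ k}, mVT k lam = gg k 0 := by
  have hw := walk_count k ⊥
  have hfin : Finite {f // VacSeq k f} := hw.1
  have hcard : Nat.card {f // VacSeq k f} = gg k 0 := hw.2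
  have := Fintype.ofFinite {f // VacSeq k f}
  let e : {f // VacSeq k f} → YD := fun f => f.1 (2*k)
  have hm : ∀ lam, mVT k lam = (Finset.univ.filter (fun f => e f = lam)).card := by
    intro lam
    rw [← Fintype.card_subtype, ← Nat.card_eq_fintype_card]
    unfold mVT
    refine Nat.card_congr (Equiv.subtypeSubtypeEquivSubtypeInter (VacSeq k) (fun f : ℕ → YoungDiagram => f (2*k) = lam)).symm
  have hz : ∀ lam, mVT k lam ≠ 0 → lam.card ≤ k ∧ lam ∈ Finset.univ.image e := by
    intro lam h
    rw [hm] at h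
    obtain ⟨f, hf⟩ := Finset.card_ne_zero.1 h
    simp only [Finset.mem_filter, Finset.mem_univ, true_and] at hf
    subst hf
    exact ⟨vac_card_le f.2 k le_rfl, Finset.mem_image_of_mem _ (Finset.mem_univ _)⟩
  rw [← hcard, Nat.card_eq_fintype_card, ← Finset.card_univ,
    Finset.card_eq_sum_card_image e Finset.univ]
  simp only [← hm]
  apply finsum_mem_eq_sum_of_subset
  · rintro lam ⟨_, h2⟩
    exact Finset.mem_coe.2 (hz lam h2).2
  · intro lam hl
    obtain ⟨f, _, rfl⟩ := Finset.mem_image.1 (Finset.mem_coe.1 hl)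
    exact vac_card_le f.2 k le_rfl

end SymPart

namespace SymPart

/-- symmetric, functional relations (partial involutions) -/
def IsPI {β : Type} (S : β → β → Prop) : Prop :=
  (∀ a b, S a b → S b a) ∧ (∀ a b c, S a b → S a c → b = c)

abbrev PI (β : Type) := {S : β → β → Prop // IsPI S}

lemma tt_succ (n : ℕ) : tt (n+1) = 2 * tt n + n * tt (n-1) := by
  rcases n with _ | n
  · rfl
  · rfl

def piCongr {α β : Type} (e : α ≃ β) : PI α ≃ PI β where
  toFun S := ⟨fun a b => S.1 (e.symm a) (e.symm b), fun a b h => S.2.1 _ _ h,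
    fun a b c h1 h2 => e.symm.injective (S.2.2 _ _ _ h1 h2)⟩
  invFun S := ⟨fun a b => S.1 (e a) (e b), fun a b h => S.2.1 _ _ h,
    fun a b c h1 h2 => e.injective (S.2.2 _ _ _ h1 h2)⟩
  left_inv S := by ext; simp
  right_inv S := by ext; simp

def relA {β : Type} (p : Prop) (S : β → β → Prop) : Option β → Option β → Prop
  | none, none => p
  | none, some _ => False
  | some _, none => False
  | some a, some b => S a b

def relB {β : Type} (b : β) (S : {x // x ≠ b} → {x // x ≠ b} → Prop) :
    Option β → Option β → Prop
  | none, none => False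
  | none, some x => x = b
  | some x, none => x = b
  | some x, some y => ∃ (hx : x ≠ b) (hy : y ≠ b), S ⟨x, hx⟩ ⟨y, hy⟩

lemma isPI_relA {β : Type} {p : Prop} {S : β → β → Prop} (h : IsPI S) : IsPI (relA p S) := by
  obtain ⟨h1, h2⟩ := h
  constructor
  · rintro (_ | a) (_ | b) <;> simp only [relA, imp_self]
    exact h1 a b
  · rintro (_ | a) (_ | b) (_ | c) <;> simp [relA]
    exact h2 a b c

lemma isPI_relB {β : Type} {b : β} {S : {x // x ≠ b} → {x // x ≠ b} → Prop} (h : IsPI S) :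
    IsPI (relB b S) := by
  obtain ⟨h1, h2⟩ := h
  constructor
  · rintro (_ | x) (_ | y) <;> simp only [relB, imp_self]
    rintro ⟨hx, hy, h⟩
    exact ⟨hy, hx, h1 _ _ h⟩
  · rintro (_ | x) (_ | y) (_ | z) <;> simp only [relB]
    · simp
    · simp
    · simp
    · rintro rfl rfl; rfl
    · simp
    · rintro rfl ⟨hx, _⟩; exact absurd rfl hx
    · rintro ⟨hx, _⟩ rfl; exact absurd rfl hx
    · rintro ⟨hx, hy, h⟩ ⟨_, hz, h'⟩
      have := h2 _ _ _ h h'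
      simpa using this

def piMap (β : Type) : (PI β ⊕ PI β) ⊕ (Σ b : β, PI {x // x ≠ b}) → PI (Option β)
  | Sum.inl (Sum.inl S) => ⟨relA False S.1, isPI_relA S.2⟩
  | Sum.inl (Sum.inr S) => ⟨relA True S.1, isPI_relA S.2⟩
  | Sum.inr ⟨b, S⟩ => ⟨relB b S.1, isPI_relB S.2⟩

lemma piMap_inj (β : Type) : Function.Injective (piMap β) := by
  have key : ∀ {β : Type} {p q : Prop} {S T : β → β → Prop}, relA p S = relA q T →
      (p ↔ q) ∧ S = T := by
    intro β p q S T h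
    refine ⟨iff_of_eq (congrFun (congrFun h none) none), ?_⟩
    funext a b
    exact congrFun (congrFun h (some a)) (some b)
  have key2 : ∀ {β : Type} {p : Prop} {S : β → β → Prop} {b : β} {T}, relA p S ≠ relB b T := by
    intro β p S b T h
    have := congrFun (congrFun h none) (some b)
    simp [relA, relB] at this
  rintro ((⟨S, hS⟩ | ⟨S, hS⟩) | ⟨b, ⟨S, hS⟩⟩) ((⟨T, hT⟩ | ⟨T, hT⟩) | ⟨c, ⟨T, hT⟩⟩) h <;>
    simp only [piMap, Subtype.mk.injEq] at h
  · obtain rfl := (key h).2; rfl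
  · have := (key h).1; simp at this
  · exact absurd h key2
  · have := (key h).1; simp at this
  · obtain rfl := (key h).2; rfl
  · exact absurd h key2
  · exact absurd h.symm key2
  · exact absurd h.symm key2
  · obtain rfl : b = c := by
      have := congrFun (congrFun h none) (some b)
      simpa [relB] using this
    obtain rfl : S = T := by
      funext ⟨x, hx⟩ ⟨y, hy⟩
      have := congrFun (congrFun h (some x)) (some y)
      simpa [relB, hx, hy] using this
    rfl

lemma piMap_surj (β : Type) : Function.Surjective (piMap β) := by
  rintro ⟨R, h1, h2⟩
  by_cases h : ∃ b, R none (some b)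
  · obtain ⟨b, hb⟩ := h
    refine ⟨Sum.inr ⟨b, ⟨fun x y => R (some x.1) (some y.1), fun x y h => h1 _ _ h,
      fun x y z h h' => ?_⟩⟩, ?_⟩
    · have := h2 _ _ _ h h'
      exact Subtype.ext (by simpa using this)
    · apply Subtype.ext
      funext x y
      apply propext
      rcases x with _ | x <;> rcases y with _ | y <;> simp only [piMap, relB]
      · rw [false_iff]
        intro h
        have := h2 _ _ _ hb h
        simp at this
      · constructor
        · rintro rfl; exact hb
        · intro h
          have := h2 _ _ _ h hb
          simpa using this
      · constructor
        · rintro rfl; exact h1 _ _ hb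
        · intro h
          have := h2 _ _ _ (h1 _ _ h) hb
          simpa using this
      · constructor
        · rintro ⟨_, _, h⟩; exact h
        · intro h
          refine ⟨?_, ?_, h⟩
          · rintro rfl
            have := h2 _ _ _ h (h1 _ _ hb)
            simp at this
          · rintro rfl
            have := h2 _ _ _ (h1 _ _ h) (h1 _ _ hb)
            simp at this
  · push Not at h
    have hS : IsPI (fun x y => R (some x) (some y)) := by
      refine ⟨fun x y h => h1 _ _ h, fun x y z h h' => ?_⟩
      have := h2 _ _ _ h h'
      simpa using this
    have hr : ∀ p : Prop, (p ↔ R none none) → relA p (fun x y => R (some x) (some y)) = R := by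
      intro p hp
      funext x y
      apply propext
      rcases x with _ | x <;> rcases y with _ | y <;> simp only [relA]
      · exact hp
      · simp [h]
      · rw [false_iff]
        intro h'
        exact h _ (h1 _ _ h')
    by_cases hn : R none none
    · exact ⟨Sum.inl (Sum.inr ⟨_, hS⟩), Subtype.ext (hr _ (by simpa using hn))⟩
    · exact ⟨Sum.inl (Sum.inl ⟨_, hS⟩), Subtype.ext (hr _ (by simpa using hn))⟩

lemma card_PI (n : ℕ) : ∀ (β : Type) [Finite β], Nat.card β = n → Nat.card (PI β) = tt n := by
  induction n using Nat.strong_induction_on with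
  | _ n ih =>
    intro β _ hn
    rcases n with _ | n
    · have : IsEmpty β := (Finite.card_eq_zero_iff).1 hn
      have : Unique (PI β) :=
        { default := ⟨fun a => isEmptyElim a, fun a => isEmptyElim a, fun a => isEmptyElim a⟩
          uniq := fun S => Subtype.ext (funext fun a => isEmptyElim a) }
      simp [tt]
    · have e : β ≃ Option (Fin n) := (Finite.equivFinOfCardEq hn).trans (finSuccEquiv n)
      rw [Nat.card_congr (piCongr e),
        ← Nat.card_congr (Equiv.ofBijective _ ⟨piMap_inj (Fin n), piMap_surj (Fin n)⟩),
        Nat.card_sum, Nat.card_sum, Nat.card_sigma, ih n (by omega) (Fin n) (by simp)]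
      have : ∀ b : Fin n, Nat.card (PI {x // x ≠ b}) = tt (n-1) := by
        intro b
        apply ih (n-1) (by omega)
        simp [Nat.card_eq_fintype_card]
      simp only [this, Finset.sum_const, Finset.card_univ, Fintype.card_fin, smul_eq_mul]
      rw [tt_succ]; ring

/-! Setoids on `Option α` -/

def extFun {α : Type} (r : Setoid α) (o : Option (Quotient r)) (x : Option α) :
    Option (Quotient r) :=
  x.elim o (fun a => some (Quotient.mk r a))

def extSetoid {α : Type} (p : Σ r : Setoid α, Option (Quotient r)) : Setoid (Option α) :=
  Setoid.ker (extFun p.1 p.2)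

lemma extSetoid_rel {α : Type} (r : Setoid α) (o : Option (Quotient r)) (x y : Option α) :
    extSetoid ⟨r, o⟩ x y ↔ extFun r o x = extFun r o y := Iff.rfl

lemma extSetoid_inj {α : Type} : Function.Injective (extSetoid (α := α)) := by
  rintro ⟨r, o⟩ ⟨s, u⟩ h
  have hr : ∀ x y, extFun r o x = extFun r o y ↔ extFun s u x = extFun s u y := by
    intro x y
    have := congrArg (fun R : Setoid (Option α) => R x y) h
    simpa [extSetoid_rel] using this
  obtain rfl : r = s := by
    ext a b
    have := hr (some a) (some b)
    simpa [extFun, Quotient.eq] using this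
  have h2 : ∀ q, o = some q ↔ u = some q := by
    intro q
    obtain ⟨a, rfl⟩ := Quotient.exists_rep q
    exact hr none (some a)
  obtain rfl : o = u := by
    apply Option.ext
    intro q
    exact h2 q
  rfl

lemma extSetoid_surj {α : Type} : Function.Surjective (extSetoid (α := α)) := by
  intro R
  let r : Setoid α := Setoid.comap some R
  have hr : ∀ a b, r a b ↔ R (some a) (some b) := fun a b => Iff.rfl
  by_cases h : ∃ a, R none (some a)
  · obtain ⟨a, ha⟩ := h
    refine ⟨⟨r, some (Quotient.mk r a)⟩, ?_⟩
    ext x y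
    simp only [extSetoid_rel, Setoid.ker_def]
    rcases x with _ | x <;> rcases y with _ | y <;>
      simp only [extFun, Option.elim, Option.some.injEq, Quotient.eq, hr]
    · simpa using R.refl _
    · exact ⟨fun h => R.trans ha h, fun h => R.trans (R.symm ha) h⟩
    · exact ⟨fun h => R.trans h (R.symm ha), fun h => R.trans h ha⟩
  · push Not at h
    refine ⟨⟨r, none⟩, ?_⟩
    ext x y
    simp only [extSetoid_rel, Setoid.ker_def]
    rcases x with _ | x <;> rcases y with _ | y <;>
      simp only [extFun, Option.elim, Option.some.injEq, Quotient.eq, hr]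
    · simpa using R.refl _
    · simpa using h y
    · simpa using fun h' => h x (R.symm h')

lemma card_ext_none {α : Type} [Finite α] (r : Setoid α) :
    Nat.card (Quotient (extSetoid ⟨r, none⟩)) = Nat.card (Quotient r) + 1 := by
  have hs : Function.Surjective (extFun r none) := by
    rintro (_ | q)
    · exact ⟨none, rfl⟩
    · obtain ⟨a, rfl⟩ := Quotient.exists_rep q
      exact ⟨some a, rfl⟩
  rw [← Finite.card_option]
  exact Nat.card_congr (Setoid.quotientKerEquivOfSurjective _ hs)

lemma card_ext_some {α : Type} [Finite α] (r : Setoid α) (q : Quotient r) :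
    Nat.card (Quotient (extSetoid ⟨r, some q⟩)) = Nat.card (Quotient r) := by
  have hs : Function.Surjective (fun x : Option α => x.elim q (fun a => Quotient.mk r a)) := by
    intro q
    obtain ⟨a, rfl⟩ := Quotient.exists_rep q
    exact ⟨some a, rfl⟩
  have he : extSetoid ⟨r, some q⟩ =
      Setoid.ker (fun x : Option α => x.elim q (fun a => Quotient.mk r a)) := by
    ext x y
    simp only [extSetoid_rel, Setoid.ker_def]
    rcases x with _ | x <;> rcases y with _ | y <;> simp [extFun]
  rw [he]
  exact Nat.card_congr (Setoid.quotientKerEquivOfSurjective _ hs)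

instance finSetoid (α : Type) [Finite α] : Finite (Setoid α) :=
  Finite.of_injective (fun r : Setoid α => (fun a b => r a b : α → α → Prop)) (by
    intro r s h
    ext a b
    exact iff_of_eq (congrFun (congrFun h a) b))

noncomputable instance ftSetoid (α : Type) [Finite α] : Fintype (Setoid α) := Fintype.ofFinite _

def OT : ℕ → Type
  | 0 => Empty
  | k+1 => Option (OT k)

def otEquiv : (k : ℕ) → Fin k ≃ OT k
  | 0 => Equiv.equivOfIsEmpty (Fin 0) Empty
  | k+1 => (finSuccEquiv k).trans (Equiv.optionCongr (otEquiv k))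

instance otFinite (k : ℕ) : Finite (OT k) := Finite.of_equiv _ (otEquiv k)

lemma sum_option (α : Type) [Finite α] (f : ℕ → ℕ) :
    ∑ R : Setoid (Option α), f (Nat.card (Quotient R)) =
      ∑ r : Setoid α, (f (Nat.card (Quotient r) + 1) +
        Nat.card (Quotient r) * f (Nat.card (Quotient r))) := by
  classical
  have : ∀ r : Setoid α, Fintype (Quotient r) := fun r => Fintype.ofFinite _
  have hb : Function.Bijective (extSetoid (α := α)) := ⟨extSetoid_inj, extSetoid_surj⟩
  rw [← Equiv.sum_comp (Equiv.ofBijective _ hb), Fintype.sum_sigma]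
  apply Finset.sum_congr rfl
  intro r _
  rw [Fintype.sum_option]
  simp only [Equiv.ofBijective_apply, card_ext_none, card_ext_some]
  simp [Nat.card_eq_fintype_card]

lemma sum_setoid (k : ℕ) : ∀ m, ∑ r : Setoid (OT k), gg m (Nat.card (Quotient r)) = gg (m+k) 0 := by
  induction k with
  | zero =>
    intro m
    have : IsEmpty (OT 0) := inferInstanceAs (IsEmpty Empty)
    have : Unique (Setoid (OT 0)) :=
      { default := ⊥
        uniq := fun r => by ext a; exact isEmptyElim a }
    rw [Fintype.sum_unique]
    simp
  | succ k ih =>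
    intro m
    have := sum_option (OT k) (gg m)
    refine Eq.trans (Eq.trans ?_ this) ?_
    · rfl
    · simp only [← gg_succ]
      rw [ih (m+1)]
      congr 1; omega

/-! symmetric setoids on `α ⊕ α` -/

abbrev SymSet (X : Type) (s : X → X) := {R : Setoid X // ∀ a b, R a b → R (s a) (s b)}

abbrev Half {α : Type} (r : Setoid α) :=
  {S : α → α → Prop // (∀ a b, S a b → S b a) ∧ (∀ a b c, S a b → r b c → S a c) ∧
    (∀ a b c, S a b → S a c → r b c)}

def glue {α : Type} (r : Setoid α) (S : α → α → Prop) : α ⊕ α → α ⊕ α → Prop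
  | Sum.inl a, Sum.inl b => r a b
  | Sum.inl a, Sum.inr b => S a b
  | Sum.inr a, Sum.inl b => S a b
  | Sum.inr a, Sum.inr b => r a b

def symEquiv (α : Type) : SymSet (α ⊕ α) Sum.swap ≃ Σ r : Setoid α, Half r where
  toFun R := ⟨Setoid.comap Sum.inl R.1, ⟨fun a b => R.1 (Sum.inl a) (Sum.inr b),
    fun a b h => R.1.symm (R.2 _ _ h),
    fun a b c h h' => R.1.trans h (R.2 _ _ h'),
    fun a b c h h' => R.2 _ _ (R.1.trans (R.1.symm h) h')⟩⟩
  invFun p := ⟨⟨glue p.1 p.2.1, by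
    obtain ⟨r, S, h1, h2, h3⟩ := p
    refine ⟨?_, ?_, ?_⟩
    · rintro (a | a) <;> exact r.refl a
    · rintro (a | a) (b | b) h
      · exact r.symm h
      · exact h1 _ _ h
      · exact h1 _ _ h
      · exact r.symm h
    · rintro (a | a) (b | b) (c | c) h h'
      · exact r.trans h h'
      · exact h1 _ _ (h2 _ _ _ (h1 _ _ h') (r.symm h))
      · exact h3 _ _ _ (h1 _ _ h) h'
      · exact h2 _ _ _ h h'
      · exact h2 _ _ _ h h'
      · exact h3 _ _ _ (h1 _ _ h) h'
      · exact h1 _ _ (h2 _ _ _ (h1 _ _ h') (r.symm h))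
      · exact r.trans h h'⟩, by
    rintro (a | a) (b | b) h <;> exact h⟩
  left_inv R := by
    obtain ⟨R, hR⟩ := R
    apply Subtype.ext
    ext x y
    rcases x with a | a <;> rcases y with b | b
    · exact Iff.rfl
    · exact Iff.rfl
    · exact ⟨fun h => hR _ _ h, fun h => hR _ _ h⟩
    · exact ⟨fun h => hR _ _ h, fun h => hR _ _ h⟩
  right_inv p := rfl

lemma card_half {α : Type} (r : Setoid α) : Nat.card (Half r) = Nat.card (PI (Quotient r)) := by
  symm
  apply Nat.card_eq_of_bijective (fun S : PI (Quotient r) =>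
    (⟨fun a b => S.1 (Quotient.mk r a) (Quotient.mk r b), fun a b h => S.2.1 _ _ h,
      fun a b c h h' => by
        rw [← (Quotient.sound h' : Quotient.mk r b = Quotient.mk r c)]; exact h,
      fun a b c h h' => Quotient.exact (S.2.2 _ _ _ h h')⟩ : Half r))
  constructor
  · rintro ⟨S, hS⟩ ⟨T, hT⟩ h
    apply Subtype.ext
    funext x y
    induction x using Quotient.ind
    induction y using Quotient.ind
    exact congrFun (congrFun (congrArg Subtype.val h) _) _
  · rintro ⟨S, h1, h2, h3⟩
    refine ⟨⟨Quotient.lift₂ S ?_, ?_, ?_⟩, ?_⟩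
    · intro a b c d hac hbd
      have key : ∀ a b c d, r a c → r b d → S a b → S c d := fun a b c d hac hbd h =>
        h1 _ _ (h2 _ _ _ (h1 _ _ (h2 _ _ _ h hbd)) hac)
      exact propext ⟨key _ _ _ _ hac hbd, key _ _ _ _ (r.symm hac) (r.symm hbd)⟩
    · intro x y
      induction x using Quotient.ind
      induction y using Quotient.ind
      exact h1 _ _
    · intro x y z
      induction x using Quotient.ind
      induction y using Quotient.ind
      induction z using Quotient.ind
      intro h h'
      exact Quotient.sound (h3 _ _ _ h h')
    · rfl

lemma card_symset (k : ℕ) : Nat.card (SymSet (OT k ⊕ OT k) Sum.swap) = gg k 0 := by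
  rw [Nat.card_congr (symEquiv _), Nat.card_sigma]
  have h := sum_setoid k 0
  rw [Nat.zero_add] at h
  rw [← h]
  apply Finset.sum_congr rfl
  intro r _
  rw [card_half, card_PI _ _ rfl, gg_zero]

def symCongr {X Y : Type} (s : X → X) (t : Y → Y) (e : X ≃ Y) (h : ∀ x, e (s x) = t (e x)) :
    SymSet X s ≃ SymSet Y t where
  toFun R := ⟨Setoid.comap e.symm R.1, by
    intro a b hab
    have h' : ∀ y, e.symm (t y) = s (e.symm y) := by
      intro y; rw [Equiv.symm_apply_eq, h]; simp
    rw [Setoid.comap_rel] at hab ⊢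
    rw [h', h']
    exact R.2 _ _ hab⟩
  invFun R := ⟨Setoid.comap e R.1, by
    intro a b hab
    rw [Setoid.comap_rel] at hab ⊢
    rw [h, h]
    exact R.2 _ _ hab⟩
  left_inv R := by apply Subtype.ext; ext; simp [Setoid.comap_rel]
  right_inv R := by apply Subtype.ext; ext; simp [Setoid.comap_rel]

def halfFun (k : ℕ) : Fin k ⊕ Fin k → Fin (2*k)
  | Sum.inl i => ⟨i.1, by omega⟩
  | Sum.inr i => Fin.rev ⟨i.1, by omega⟩

lemma halfFun_bij (k : ℕ) : Function.Bijective (halfFun k) := by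
  constructor
  · rintro (⟨a, ha⟩ | ⟨a, ha⟩) (⟨b, hb⟩ | ⟨b, hb⟩) h <;>
      simp only [halfFun, Fin.ext_iff, Fin.val_rev, Sum.inl.injEq, Sum.inr.injEq] at h ⊢ <;> omega
  · rintro ⟨a, ha⟩
    by_cases h : a < k
    · exact ⟨Sum.inl ⟨a, h⟩, rfl⟩
    · refine ⟨Sum.inr ⟨2*k-1-a, by omega⟩, ?_⟩
      simp only [halfFun, Fin.ext_iff, Fin.val_rev]
      omega

lemma card_symset_fin (k : ℕ) : Nat.card (SymSet (Fin (2*k)) Fin.rev) = gg k 0 := by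
  rw [← card_symset]
  symm
  refine Nat.card_congr (symCongr _ _
    ((Equiv.sumCongr (otEquiv k).symm (otEquiv k).symm).trans
      (Equiv.ofBijective _ (halfFun_bij k))) ?_)
  rintro (x | x)
  · simp [halfFun]
  · simp [halfFun]

lemma card_finpartition (k : ℕ) :
    Nat.card {P : Finpartition (Finset.univ : Finset (Fin (2*k))) //
        P.parts.image (fun B => B.image Fin.rev) = P.parts} =
      Nat.card (SymSet (Fin (2*k)) Fin.rev) := by
  have hmem : ∀ (P : Finpartition (Finset.univ : Finset (Fin (2*k)))) a b,
      b ∈ P.part a ↔ P.part b = P.part a := by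
    intro P a b
    exact P.mem_part_iff_part_eq_part (Finset.mem_univ _) (Finset.mem_univ _)
  have hparts : ∀ (P : Finpartition (Finset.univ : Finset (Fin (2*k)))) t,
      t ∈ P.parts ↔ ∃ a, P.part a = t := by
    intro P t
    constructor
    · intro ht
      obtain ⟨a, ha⟩ := P.nonempty_of_mem_parts ht
      exact ⟨a, P.part_eq_of_mem ht ha⟩
    · rintro ⟨a, rfl⟩
      exact P.part_mem.2 (Finset.mem_univ _)
  have himg : ∀ (P : Finpartition (Finset.univ : Finset (Fin (2*k)))),
      (P.parts.image (fun B => B.image Fin.rev) = P.parts) ↔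
      ∀ a b, P.part a = P.part b → P.part a.rev = P.part b.rev := by
    intro P
    constructor
    · intro h
      have key : ∀ a, P.part a.rev = (P.part a).image Fin.rev := by
        intro a
        apply P.part_eq_of_mem
        · rw [← h]
          exact Finset.mem_image_of_mem _ ((hparts _ _).2 ⟨a, rfl⟩)
        · exact Finset.mem_image_of_mem _ ((hmem _ _ _).2 rfl)
      intro a b hab
      rw [key, key, hab]
    · intro h
      have key : ∀ a, (P.part a).image Fin.rev = P.part a.rev := by
        intro a
        ext b
        rw [hmem, Finset.mem_image]
        constructor
        · rintro ⟨c, hc, rfl⟩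
          exact h _ _ ((hmem _ _ _).1 hc)
        · intro hb
          refine ⟨b.rev, (hmem _ _ _).2 ?_, Fin.rev_rev b⟩
          simpa using h _ _ hb
      ext t
      rw [Finset.mem_image]
      constructor
      · rintro ⟨B, hB, rfl⟩
        obtain ⟨a, rfl⟩ := (hparts _ _).1 hB
        exact (hparts _ _).2 ⟨a.rev, (key a).symm⟩
      · intro ht
        obtain ⟨a, rfl⟩ := (hparts _ _).1 ht
        exact ⟨P.part a.rev, (hparts _ _).2 ⟨_, rfl⟩, by simpa using key a.rev⟩
  apply Nat.card_eq_of_bijective (fun P => (⟨Setoid.ker P.1.part, fun a b h =>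
    (himg P.1).1 P.2 a b h⟩ : SymSet (Fin (2*k)) Fin.rev))
  constructor
  · rintro ⟨P, hP⟩ ⟨Q, hQ⟩ h
    have h1 : Setoid.ker P.part = Setoid.ker Q.part := congrArg Subtype.val h
    have h2 : ∀ a b, P.part a = P.part b ↔ Q.part a = Q.part b := by
      intro a b
      have := congrArg (fun R : Setoid (Fin (2*k)) => R a b) h1
      simpa [Setoid.ker_def] using this
    have h3 : P.part = Q.part := by
      funext a
      ext b
      rw [hmem, hmem, h2]
    apply Subtype.ext
    apply Finpartition.ext
    ext t
    rw [hparts, hparts, h3]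
  · rintro ⟨R, hR⟩
    classical
    have hk : ∀ a b, (Finpartition.ofSetoid R).part a = (Finpartition.ofSetoid R).part b ↔
        R a b := by
      intro a b
      rw [eq_comm, ← hmem, Finpartition.mem_part_ofSetoid_iff_rel]
    refine ⟨⟨Finpartition.ofSetoid R, (himg _).2 ?_⟩, ?_⟩
    · intro a b h
      rw [hk] at h ⊢
      exact hR _ _ h
    · apply Subtype.ext
      ext a b
      rw [Setoid.ker_def]
      exact hk a b

end SymPart

/-- The number of symmetric set partitions of `{1,...,k,1',...,k'}` (fixed by the flip
`i ↔ i'`, which in the one-row standard representation on `2k` vertices is the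
reversal `v ↦ 2k+1-v`) equals the sum over partitions `λ` of size at most `k` of the
number of vacillating tableaux of shape `λ` and length `2k`. -/
theorem card_symmetric_partitions (k : ℕ) :
    Nat.card {P : Finpartition (Finset.univ : Finset (Fin (2*k))) //
        P.parts.image (fun B => B.image Fin.rev) = P.parts} =
      ∑ᶠ lam ∈ {lam : YoungDiagram | lam.card ≤ k}, mVT k lam := by
  rw [SymPart.card_finpartition, SymPart.card_symset_fin, SymPart.sum_mVT]
end
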